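/- (Theorem 3, main result.) The ID capacity region 𝒞 of the two-receiver BC W(y,z|x) under the average-error criterion equals the set of all rate pairs (R_𝒴, R_𝒵) ∈ [0,∞)² for which there exists a PMF P on 𝒳 with R_𝒴 ≤ I(P, W_𝒴) and R_𝒵 ≤ I(P, W_𝒵). -/

import Mathlib

open scoped Classical
open Finset

noncomputable section

/-- `P` is a probability mass function on the finite type `X`. -/
def IsPMF {X : Type*} [Fintype X] (P : X → ℝ) : Prop :=
  (∀ x, 0 ≤ P x) ∧ ∑ x, P x = 1

/-- `W` is a (discrete memoryless) channel from `X` to `Y`. -/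
def IsChannel {X Y : Type*} [Fintype Y] (W : X → Y → ℝ) : Prop :=
  (∀ x y, 0 ≤ W x y) ∧ ∀ x, ∑ y, W x y = 1

/-- The `n`-fold memoryless extension `W^n(𝐲|𝐱) = ∏ᵢ W(yᵢ|xᵢ)`. -/
def Wn {X Y : Type*} (W : X → Y → ℝ) (n : ℕ) (x : Fin n → X) (y : Fin n → Y) : ℝ :=
  ∏ i, W (x i) (y i)

/-- Mutual information `I(P,W)` (natural logarithm), with the convention that
terms with `P x * W x y = 0` contribute `0`. -/
def mutInf {X Y : Type*} [Fintype X] [Fintype Y] (P : X → ℝ) (W : X → Y → ℝ) : ℝ :=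
  ∑ x, ∑ y, if P x * W x y = 0 then 0
    else P x * W x y * Real.log (W x y / ∑ x', P x' * W x' y)

/-- The error requirements of an `(n, M, l1, l2)` ID code for the DMC `W`:
maximum probability of missed identification at most `l1`, maximum probability
of wrong identification at most `l2`. -/
def IDCodeErr {X Y M : Type*} [Fintype X] [Fintype Y]
    (n : ℕ) (W : X → Y → ℝ) (Q : M → (Fin n → X) → ℝ)
    (D : M → Finset (Fin n → Y)) (l1 l2 : ℝ) : Prop :=
  (∀ m, ∑ x, Q m x * ∑ y ∈ (D m)ᶜ, Wn W n x y ≤ l1) ∧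
  (∀ m m', m ≠ m' → ∑ x, Q m x * ∑ y ∈ D m', Wn W n x y ≤ l2)

/-- `(n, M, l1, l2)` ID code for the DMC `W`. -/
def IsIDCode {X Y M : Type*} [Fintype X] [Fintype Y]
    (n : ℕ) (W : X → Y → ℝ) (Q : M → (Fin n → X) → ℝ)
    (D : M → Finset (Fin n → Y)) (l1 l2 : ℝ) : Prop :=
  (∀ m, IsPMF (Q m)) ∧ IDCodeErr n W Q D l1 l2

/-- `W` is a two-receiver broadcast channel from `X` to `Y × Z`. -/
def IsBC {X Y Z : Type*} [Fintype Y] [Fintype Z] (W : X → Y → Z → ℝ) : Prop :=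
  (∀ x y z, 0 ≤ W x y z) ∧ ∀ x, ∑ y, ∑ z, W x y z = 1

/-- Marginal channel to terminal `Y`. -/
def margY {X Y Z : Type*} [Fintype Z] (W : X → Y → Z → ℝ) : X → Y → ℝ :=
  fun x y => ∑ z, W x y z

/-- Marginal channel to terminal `Z`. -/
def margZ {X Y Z : Type*} [Fintype Y] (W : X → Y → Z → ℝ) : X → Z → ℝ :=
  fun x z => ∑ y, W x y z

/-- `(n, ℳ_Y, ℳ_Z, l1Y, l2Y, l1Z, l2Z)` average-error ID code for the BC `W`:
every `Q my mz` is a PMF on `Xⁿ`, and the mixtures (averaging uniformly over the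
other receiver's message) form ID codes for the marginal channels. -/
def IsBCIDCode {X Y Z : Type*} [Fintype X] [Fintype Y] [Fintype Z]
    (n kY kZ : ℕ) (W : X → Y → Z → ℝ)
    (Q : Fin kY → Fin kZ → (Fin n → X) → ℝ)
    (DY : Fin kY → Finset (Fin n → Y)) (DZ : Fin kZ → Finset (Fin n → Z))
    (l1Y l2Y l1Z l2Z : ℝ) : Prop :=
  (∀ my mz, IsPMF (Q my mz)) ∧
  IDCodeErr n (margY W) (fun my x => (kZ : ℝ)⁻¹ * ∑ mz, Q my mz x) DY l1Y l2Y ∧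
  IDCodeErr n (margZ W) (fun mz x => (kY : ℝ)⁻¹ * ∑ my, Q my mz x) DZ l1Z l2Z

/-- A rate pair is achievable for the BC `W` under the average-error criterion. -/
def BCAchievable {X Y Z : Type*} [Fintype X] [Fintype Y] [Fintype Z]
    (W : X → Y → Z → ℝ) (Rp : ℝ × ℝ) : Prop :=
  0 ≤ Rp.1 ∧ 0 ≤ Rp.2 ∧
  ∀ l1Y l2Y l1Z l2Z : ℝ, 0 < l1Y → 0 < l2Y → 0 < l1Z → 0 < l2Z →
    ∃ n₀ : ℕ, ∀ n : ℕ, n₀ ≤ n →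
      ∃ (kY kZ : ℕ) (Q : Fin kY → Fin kZ → (Fin n → X) → ℝ)
        (DY : Fin kY → Finset (Fin n → Y)) (DZ : Fin kZ → Finset (Fin n → Z)),
        IsBCIDCode n kY kZ W Q DY DZ l1Y l2Y l1Z l2Z ∧
        ((0 < Rp.1 → Rp.1 ≤ (1 / n) * Real.log (Real.log kY)) ∧ (Rp.1 = 0 → kY = 1)) ∧
        ((0 < Rp.2 → Rp.2 ≤ (1 / n) * Real.log (Real.log kZ)) ∧ (Rp.2 = 0 → kZ = 1))

/-!
Converse. Call an input word bad if its type has mutual information below `R - δ` with a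
receiver's channel. The channel restricted to bad words can be simulated, up to a small error in
total variation, from a codebook of `exp (n * (R - δ / 2))` words. Messages giving bad words
substantial probability therefore need distinct codebooks, and there are far fewer codebooks than
messages. So a uniformly chosen message rarely produces a bad word. Averaging the mixtures of
either receiver over that receiver's messages gives the same input distribution, hence one word is
bad for neither receiver, and its type is the required `P`.

Achievability. Draw a pool of words independently from `P`, and let each message of each receiver
own a subset of the pool, almost disjoint from the subsets of the receiver's other messages. With
random coding, uniform inputs on these subsets are identification codes. To serve both receivers,
index the pool by `(A × B) × C`. A message of the first receiver owns the graph of a function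
`A × B → C`, and one of the second receiver owns the graph of a function `A → B`, times `C`. Above
each `a : A` these two sets meet in exactly one point. If both families of functions are closed
under adding constants, then averaging the uniform distribution on these intersections over the
messages of one receiver gives the uniform distribution on the set owned by the other.
-/

section

open Real Filter Topology

section FiniteProbability

variable {U V : Type*} [Fintype U] [Fintype V]

/-- The mean of `f` under the weights `p`. -/
def mean (p f : U → ℝ) : ℝ := ∑ u, p u * f u

/-- The probability of the event `E` under the weights `p`. -/
def prob (p : U → ℝ) (E : Set U) : ℝ := ∑ u, E.indicator p u

/-- The output distribution of the channel `W` under the input weights `P`. -/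
def outDist (P : U → ℝ) (W : U → V → ℝ) (v : V) : ℝ := ∑ u, P u * W u v

theorem prob_eq_mean (p : U → ℝ) (E : Set U) : prob p E = mean p (E.indicator 1) :=
  sum_congr rfl fun u _ => by by_cases hu : u ∈ E <;> simp [hu]

theorem prob_coe (p : U → ℝ) (s : Finset U) : prob p s = ∑ u ∈ s, p u := by
  simp [prob, Set.indicator_apply]

theorem mean_const_mul (p f : U → ℝ) (c : ℝ) :
    mean p (fun u => c * f u) = c * mean p f := by
  simp only [mean, mul_sum, mul_left_comm]

theorem mean_add (p f g : U → ℝ) :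
    mean p (fun u => f u + g u) = mean p f + mean p g := by
  simp only [mean, mul_add, sum_add_distrib]

theorem mean_sum {ι : Type*} (s : Finset ι) (p : U → ℝ) (f : ι → U → ℝ) :
    mean p (fun u => ∑ i ∈ s, f i u) = ∑ i ∈ s, mean p (f i) := by
  simp only [mean, mul_sum]
  exact sum_comm

theorem mean_mono {p f g : U → ℝ} (hp : ∀ u, 0 ≤ p u) (h : ∀ u, f u ≤ g u) :
    mean p f ≤ mean p g :=
  sum_le_sum fun u _ => mul_le_mul_of_nonneg_left (h u) (hp u)

theorem IsPMF.mean_const {p : U → ℝ} (hp : IsPMF p) (c : ℝ) : mean p (fun _ => c) = c := by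
  rw [mean, ← sum_mul, hp.2, one_mul]

theorem IsPMF.exists_pos {p : U → ℝ} (hp : IsPMF p) : ∃ u, 0 < p u := by
  by_contra! h
  linarith [hp.2, sum_nonpos fun u (_ : u ∈ univ) => h u]

theorem IsPMF.exists_le {p : U → ℝ} (hp : IsPMF p) {f : U → ℝ} {c : ℝ} (h : mean p f ≤ c) :
    ∃ u, f u ≤ c := by
  by_contra! hc
  obtain ⟨v, hv⟩ := hp.exists_pos
  refine h.not_gt ?_
  rw [← hp.mean_const c]
  exact sum_lt_sum (fun u _ => mul_le_mul_of_nonneg_left (hc u).le (hp.1 u))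
    ⟨v, mem_univ v, mul_lt_mul_of_pos_left (hc v) hv⟩

theorem prob_nonneg {p : U → ℝ} (hp : ∀ u, 0 ≤ p u) (E : Set U) : 0 ≤ prob p E :=
  sum_nonneg fun _ _ => Set.indicator_nonneg (fun u _ => hp u) _

theorem prob_mono {p : U → ℝ} (hp : ∀ u, 0 ≤ p u) {E F : Set U}
    (h : ∀ u ∈ E, 0 < p u → u ∈ F) : prob p E ≤ prob p F := by
  have hF : ∀ u, 0 ≤ F.indicator p u := Set.indicator_nonneg fun u _ => hp u
  refine sum_le_sum fun u _ => Set.indicator_apply_le' (fun hE => ?_) fun _ => hF u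
  rcases (hp u).eq_or_lt with h0 | h0
  · exact h0 ▸ hF u
  · rw [Set.indicator_of_mem (h u hE h0)]

theorem prob_mono_weights {p q : U → ℝ} (h : ∀ u, p u ≤ q u) (E : Set U) : prob p E ≤ prob q E :=
  sum_le_sum fun u _ => Set.indicator_le_indicator (h u)

theorem prob_add_prob_compl (p : U → ℝ) (E : Set U) : prob p E + prob p Eᶜ = ∑ u, p u := by
  rw [prob, prob, ← sum_add_distrib]
  exact sum_congr rfl fun u _ => congrFun (Set.indicator_self_add_compl E p) u

theorem IsPMF.prob_compl {p : U → ℝ} (hp : IsPMF p) (E : Set U) : prob p Eᶜ = 1 - prob p E := by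
  linarith [prob_add_prob_compl p E, hp.2]

theorem IsPMF.prob_le_one {p : U → ℝ} (hp : IsPMF p) (E : Set U) : prob p E ≤ 1 := by
  linarith [hp.prob_compl E, prob_nonneg hp.1 Eᶜ]

theorem prob_union_le {p : U → ℝ} (hp : ∀ u, 0 ≤ p u) (E F : Set U) :
    prob p (E ∪ F) ≤ prob p E + prob p F := by
  rw [prob, prob, prob, ← sum_add_distrib]
  refine sum_le_sum fun u _ => ?_
  have := hp u
  by_cases hE : u ∈ E <;> by_cases hF : u ∈ F <;> simp [hE, hF, this]

theorem prob_biUnion_le {ι : Type*} {p : U → ℝ} (hp : ∀ u, 0 ≤ p u) (s : Finset ι)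
    (E : ι → Set U) : prob p (⋃ i ∈ s, E i) ≤ ∑ i ∈ s, prob p (E i) := by
  induction s using Finset.induction_on with
  | empty => simp [prob]
  | insert i s hi ih =>
    rw [set_biUnion_insert, sum_insert hi]
    exact (prob_union_le hp _ _).trans (by gcongr)

theorem IsPMF.exists_notMem {p : U → ℝ} (hp : IsPMF p) {E : Set U} (h : prob p E < 1) :
    ∃ u, u ∉ E := by
  by_contra! hE
  rw [Set.eq_univ_of_forall hE] at h
  simp [prob, hp.2] at h

theorem mul_prob_le_mean {p f : U → ℝ} (hp : ∀ u, 0 ≤ p u) (hf : ∀ u, 0 ≤ f u) (c : ℝ) :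
    c * prob p {u | c ≤ f u} ≤ mean p f := by
  rw [prob, mul_sum]
  refine sum_le_sum fun u _ => ?_
  by_cases hu : c ≤ f u
  · rw [Set.indicator_of_mem (by exact hu), mul_comm]
    exact mul_le_mul_of_nonneg_left hu (hp u)
  · simpa [hu] using mul_nonneg (hp u) (hf u)

theorem mean_outDist (P : U → ℝ) (W : U → V → ℝ) (g : V → ℝ) :
    mean (outDist P W) g = mean P fun u => mean (W u) g := by
  simp only [mean, outDist, sum_mul, mul_sum, mul_assoc]
  exact sum_comm

theorem prob_outDist (P : U → ℝ) (W : U → V → ℝ) (E : Set V) :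
    prob (outDist P W) E = mean P fun u => prob (W u) E := by
  simp only [prob_eq_mean, mean_outDist]

theorem sum_outDist (P : U → ℝ) (W : U → V → ℝ) :
    ∑ v, outDist P W v = mean P fun u => ∑ v, W u v := by
  simpa only [mean, Pi.one_apply, mul_one] using mean_outDist P W 1

omit [Fintype V] in
theorem outDist_nonneg {P : U → ℝ} {W : U → V → ℝ} (hP : ∀ u, 0 ≤ P u) (hW : ∀ u v, 0 ≤ W u v)
    (v : V) : 0 ≤ outDist P W v :=
  sum_nonneg fun u _ => mul_nonneg (hP u) (hW u v)

theorem isPMF_outDist {P : U → ℝ} (hP : IsPMF P) {W : U → V → ℝ} (hW : IsChannel W) :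
    IsPMF (outDist P W) :=
  ⟨outDist_nonneg hP.1 hW.1, by simp only [sum_outDist, hW.2, hP.mean_const]⟩

theorem abs_prob_sub_prob_le (p q : U → ℝ) (E : Set U) :
    |prob p E - prob q E| ≤ ∑ u, |p u - q u| := by
  rw [prob, prob, ← sum_sub_distrib]
  refine (abs_sum_le_sum_abs _ _).trans (sum_le_sum fun u _ => ?_)
  by_cases hu : u ∈ E <;> simp [hu]

theorem IsPMF.mean_sub_mean {p : U → ℝ} (hp : IsPMF p) (f : U → ℝ) :
    mean p (fun u => f u - mean p f) = 0 := by
  simp only [sub_eq_add_neg, mean_add, hp.mean_const]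
  exact add_neg_cancel _

theorem IsPMF.variance_le {p : U → ℝ} (hp : IsPMF p) (f : U → ℝ) :
    mean p (fun u => (f u - mean p f) ^ 2) ≤ mean p fun u => f u ^ 2 := by
  have expand : ∀ u, (f u - mean p f) ^ 2 = f u ^ 2 + ((-2 * mean p f) * f u + mean p f ^ 2) :=
    fun u => by ring
  simp only [expand, mean_add, mean_const_mul, hp.mean_const]
  nlinarith [sq_nonneg (mean p f)]

theorem exp_mul_le_one_add {s a : ℝ} (h0 : 0 ≤ a) (h1 : a ≤ 1) : exp (s * a) ≤ 1 + exp s * a := by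
  have chord := convexOn_exp.2 (Set.mem_univ (0 : ℝ)) (Set.mem_univ s) (sub_nonneg.2 h1) h0
    (by ring)
  simp only [smul_eq_mul, mul_zero, zero_add, exp_zero, mul_one] at chord
  rw [mul_comm s a]
  nlinarith

theorem IsPMF.mean_exp_le {p f : U → ℝ} (hp : IsPMF p) (h0 : ∀ u, 0 ≤ f u) (h1 : ∀ u, f u ≤ 1)
    {s τ : ℝ} (hm : mean p f ≤ τ) (hτ : exp s * τ ≤ 1) :
    mean p (fun u => exp (s * f u)) ≤ exp 1 :=
  calc mean p (fun u => exp (s * f u))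
      ≤ mean p fun u => 1 + exp s * f u := mean_mono hp.1 fun u => exp_mul_le_one_add (h0 u) (h1 u)
    _ = 1 + exp s * mean p f := by rw [mean_add, hp.mean_const, mean_const_mul]
    _ ≤ 1 + exp s * τ := by gcongr
    _ ≤ exp 1 := by linarith [add_one_le_exp (1 : ℝ)]

end FiniteProbability

section ProductDistribution

variable {ι U : Type*} [Fintype ι]

/-- The joint law of independent coordinates with laws `p i`. -/
def prodDist (p : ι → U → ℝ) (x : ι → U) : ℝ := ∏ i, p i (x i)

theorem prodDist_nonneg {p : ι → U → ℝ} (hp : ∀ i u, 0 ≤ p i u) (x : ι → U) : 0 ≤ prodDist p x :=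
  prod_nonneg fun i _ => hp i (x i)

variable [DecidableEq ι] [Fintype U]

theorem mean_prodDist_prod (p g : ι → U → ℝ) :
    mean (prodDist p) (fun x => ∏ i, g i (x i)) = ∏ i, mean (p i) (g i) := by
  simp only [mean, prodDist, ← prod_mul_distrib]
  rw [prod_univ_sum, Fintype.piFinset_univ]

theorem isPMF_prodDist {p : ι → U → ℝ} (hp : ∀ i, IsPMF (p i)) : IsPMF (prodDist p) :=
  ⟨prodDist_nonneg fun i => (hp i).1, by
    simpa [mean, (hp _).2] using mean_prodDist_prod p fun _ _ => 1⟩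

theorem mean_prodDist_apply {p : ι → U → ℝ} (hp : ∀ i, IsPMF (p i)) (i : ι) (g : U → ℝ) :
    mean (prodDist p) (fun x => g (x i)) = mean (p i) g := by
  have h := mean_prodDist_prod p fun k u => if k = i then g u else 1
  simp only [prod_ite_eq', mem_univ, if_true] at h
  rw [h, prod_eq_single i (fun k _ hk => by simp [hk, (hp k).mean_const]) (by simp)]
  simp

theorem mean_prodDist_mul_eq_zero {p f : ι → U → ℝ} (hf : ∀ i, mean (p i) (f i) = 0) {i j : ι}
    (hij : i ≠ j) : mean (prodDist p) (fun x => f i (x i) * f j (x j)) = 0 := by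
  have h := mean_prodDist_prod p fun k u =>
    (if k = i then f k u else 1) * if k = j then f k u else 1
  simp only [prod_mul_distrib, prod_ite_eq', mem_univ, if_true] at h
  rw [h]
  exact prod_eq_zero (mem_univ i) (by simpa [hij] using hf i)

theorem mean_prodDist_sum_sq {p f : ι → U → ℝ} (hp : ∀ i, IsPMF (p i))
    (hf : ∀ i, mean (p i) (f i) = 0) :
    mean (prodDist p) (fun x => (∑ i, f i (x i)) ^ 2) = ∑ i, mean (p i) fun u => f i u ^ 2 := by
  simp only [sq (∑ i, f i _), sum_mul_sum, mean_sum]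
  refine sum_congr rfl fun i _ => ?_
  rw [sum_eq_single i (fun j _ hj => mean_prodDist_mul_eq_zero hf hj.symm) (by simp)]
  simpa only [sq] using mean_prodDist_apply hp i fun u => f i u * f i u

theorem mean_prodDist_sum_sub_sq_le {p : ι → U → ℝ} (hp : ∀ i, IsPMF (p i)) (f : ι → U → ℝ) :
    mean (prodDist p) (fun x => (∑ i, f i (x i) - ∑ i, mean (p i) (f i)) ^ 2)
      ≤ ∑ i, mean (p i) fun u => f i u ^ 2 := by
  simp only [← sum_sub_distrib]
  rw [mean_prodDist_sum_sq (f := fun i u => f i u - mean (p i) (f i)) hp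
    fun i => (hp i).mean_sub_mean (f i)]
  exact sum_le_sum fun i _ => (hp i).variance_le (f i)

theorem chebyshev_prodDist {p : ι → U → ℝ} (hp : ∀ i, IsPMF (p i)) (f : ι → U → ℝ) {B t : ℝ}
    (ht : 0 < t) (hB : ∀ i, mean (p i) (fun u => f i u ^ 2) ≤ B) :
    prob (prodDist p) {x | t ≤ |∑ i, f i (x i) - ∑ i, mean (p i) (f i)|}
      ≤ Fintype.card ι * B / t ^ 2 := by
  rw [le_div_iff₀' (by positivity)]
  calc t ^ 2 * prob (prodDist p) {x | t ≤ |∑ i, f i (x i) - ∑ i, mean (p i) (f i)|}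
      ≤ t ^ 2 * prob (prodDist p) {x | t ^ 2 ≤ (∑ i, f i (x i) - ∑ i, mean (p i) (f i)) ^ 2} := by
        gcongr
        refine prob_mono (isPMF_prodDist hp).1 fun x hx _ => ?_
        simpa only [sq_abs, Set.mem_ofPred_eq] using pow_le_pow_left₀ ht.le hx 2
    _ ≤ mean (prodDist p) fun x => (∑ i, f i (x i) - ∑ i, mean (p i) (f i)) ^ 2 :=
        mul_prob_le_mean (isPMF_prodDist hp).1 (fun x => sq_nonneg _) _
    _ ≤ ∑ i, mean (p i) fun u => f i u ^ 2 := mean_prodDist_sum_sub_sq_le hp f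
    _ ≤ Fintype.card ι * B := by simpa using sum_le_sum fun i (_ : i ∈ univ) => hB i

theorem mean_prodDist_exp_sum_le {p f : ι → U → ℝ} (hp : ∀ i, IsPMF (p i)) {s : ℝ}
    (h : ∀ i, mean (p i) (fun u => exp (s * f i u)) ≤ exp 1) (V : Finset ι) :
    mean (prodDist p) (fun x => exp (s * ∑ i ∈ V, f i (x i))) ≤ exp #V := by
  calc mean (prodDist p) (fun x => exp (s * ∑ i ∈ V, f i (x i)))
      = mean (prodDist p) fun x => ∏ i, if i ∈ V then exp (s * f i (x i)) else 1 := by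
        simp only [mul_sum, exp_sum, prod_ite_mem, univ_inter]
    _ = ∏ i, mean (p i) fun u => if i ∈ V then exp (s * f i u) else 1 :=
        mean_prodDist_prod p fun i u => if i ∈ V then exp (s * f i u) else 1
    _ ≤ ∏ i, if i ∈ V then exp 1 else 1 := by
        refine prod_le_prod (fun i _ => sum_nonneg fun u _ =>
          mul_nonneg ((hp i).1 u) (by split_ifs <;> positivity)) fun i _ => ?_
        split_ifs
        · exact h i
        · rw [(hp i).mean_const]
    _ = exp #V := by simp [← exp_nat_mul]

theorem chernoff_prodDist {p f : ι → U → ℝ} (hp : ∀ i, IsPMF (p i)) (h0 : ∀ i u, 0 ≤ f i u)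
    (h1 : ∀ i u, f i u ≤ 1) {ε τ M : ℝ} (hε : 0 < ε) (hτ : exp (2 / ε) * τ ≤ 1)
    (hm : ∀ i, mean (p i) (f i) ≤ τ) {V : Finset ι} (hV : #V ≤ M) :
    prob (prodDist p) {x | ε * M ≤ ∑ i ∈ V, f i (x i)} ≤ exp (-M) := by
  have hmgf := (mean_prodDist_exp_sum_le hp
    (fun i => (hp i).mean_exp_le (h0 i) (h1 i) (hm i) hτ) V).trans (exp_le_exp.2 hV)
  have hsub : ∀ x : ι → U, ε * M ≤ ∑ i ∈ V, f i (x i) →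
      exp (2 * M) ≤ exp (2 / ε * ∑ i ∈ V, f i (x i)) := fun x hx => by
    have := mul_le_mul_of_nonneg_left hx (by positivity : 0 ≤ 2 / ε)
    rw [← mul_assoc, div_mul_cancel₀ _ hε.ne'] at this
    exact exp_le_exp.2 this
  have markov := (mul_prob_le_mean (isPMF_prodDist hp).1 (fun x => (exp_pos _).le)
    (exp (2 * M))).trans hmgf
  rw [← le_div_iff₀' (exp_pos _), ← exp_sub] at markov
  refine (prob_mono (isPMF_prodDist hp).1 fun x hx _ => hsub x hx).trans (markov.trans_eq ?_)
  ring_nf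

theorem mean_prob_piecewise {p : ι → U → ℝ} (hp : ∀ i, IsPMF (p i)) (s : Finset ι)
    (E : Set (ι → U)) :
    mean (prodDist p) (fun a => prob (prodDist p) {b | s.piecewise a b ∈ E})
      = prob (prodDist p) E := by
  let swap : (ι → U) × (ι → U) → (ι → U) × (ι → U) :=
    fun z => (s.piecewise z.2 z.1, s.piecewise z.1 z.2)
  have swap_swap : Function.Involutive swap := fun z => by
    ext i <;> by_cases hi : i ∈ s <;> simp [swap, hi]
  have prod_swap : ∀ z, prodDist p (swap z).1 * prodDist p (swap z).2
      = prodDist p z.1 * prodDist p z.2 := fun z => by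
    simp only [prodDist, ← prod_mul_distrib]
    exact prod_congr rfl fun i _ => by by_cases hi : i ∈ s <;> simp [swap, hi, mul_comm]
  calc mean (prodDist p) (fun a => prob (prodDist p) {b | s.piecewise a b ∈ E})
      = ∑ z : (ι → U) × (ι → U), prodDist p z.1 * prodDist p z.2 * E.indicator 1 (swap z).2 := by
        simp only [prob_eq_mean, mean, mul_sum, Fintype.sum_prod_type, mul_assoc]
        rfl
    _ = ∑ z : (ι → U) × (ι → U), prodDist p z.1 * prodDist p z.2 * E.indicator 1 z.2 := by
        rw [← Equiv.sum_comp swap_swap.toPerm]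
        exact sum_congr rfl fun z _ => by
          rw [Function.Involutive.coe_toPerm, prod_swap, swap_swap]
    _ = mean (prodDist p) fun _ => prob (prodDist p) E := by
        simp only [prob_eq_mean, mean, mul_sum, Fintype.sum_prod_type, mul_assoc]
    _ = prob (prodDist p) E := (isPMF_prodDist hp).mean_const _

theorem prob_prodDist_le_of_piecewise {p : ι → U → ℝ} (hp : ∀ i, IsPMF (p i)) (s : Finset ι)
    {E : Set (ι → U)} {c : ℝ} (h : ∀ a, prob (prodDist p) {b | s.piecewise a b ∈ E} ≤ c) :
    prob (prodDist p) E ≤ c := by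
  rw [← mean_prob_piecewise hp s E, ← (isPMF_prodDist hp).mean_const c]
  exact mean_mono (isPMF_prodDist hp).1 h

end ProductDistribution

section MutualInformation

variable {X Y : Type*} [Fintype X]

/-- The joint law of the input and the output of the channel `W` under the input weights `P`. -/
def joint (P : X → ℝ) (W : X → Y → ℝ) (u : X × Y) : ℝ := P u.1 * W u.1 u.2

/-- The information density `log (W(y|x) / (PW)(y))`. -/
def infoDens (P : X → ℝ) (W : X → Y → ℝ) (x : X) (y : Y) : ℝ := log (W x y / outDist P W y)

theorem mul_le_outDist {P : X → ℝ} (hP : ∀ x, 0 ≤ P x) {W : X → Y → ℝ} (hW : ∀ x y, 0 ≤ W x y)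
    (x : X) (y : Y) : P x * W x y ≤ outDist P W y :=
  single_le_sum (f := fun x => P x * W x y) (fun x _ => mul_nonneg (hP x) (hW x y)) (mem_univ x)

theorem exp_sum_infoDens_mul {ι : Type*} [Fintype ι] {P : X → ℝ} (hP : ∀ x, 0 ≤ P x)
    {W : X → Y → ℝ} (hW : ∀ x y, 0 ≤ W x y) {x : ι → X} {y : ι → Y}
    (h : ∀ i, 0 < P (x i) * W (x i) (y i)) :
    exp (∑ i, infoDens P W (x i) (y i)) * ∏ i, outDist P W (y i) = ∏ i, W (x i) (y i) := by
  rw [exp_sum, ← prod_mul_distrib]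
  refine prod_congr rfl fun i _ => ?_
  have hout : 0 < outDist P W (y i) := (h i).trans_le (mul_le_outDist hP hW _ _)
  rw [infoDens, exp_log (div_pos (pos_of_mul_pos_right (h i) (hP _)) hout),
    div_mul_cancel₀ _ hout.ne']

variable [Fintype Y]

theorem mean_joint (P : X → ℝ) (W : X → Y → ℝ) (f : X × Y → ℝ) :
    mean (joint P W) f = mean P fun x => mean (W x) fun y => f (x, y) := by
  simp only [mean, joint, Fintype.sum_prod_type, mul_sum, mul_assoc]

omit [Fintype X] in
theorem IsChannel.isPMF {W : X → Y → ℝ} (hW : IsChannel W) (x : X) : IsPMF (W x) :=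
  ⟨hW.1 x, hW.2 x⟩

theorem isPMF_joint {P : X → ℝ} (hP : IsPMF P) {W : X → Y → ℝ} (hW : IsChannel W) :
    IsPMF (joint P W) :=
  ⟨fun u => mul_nonneg (hP.1 _) (hW.1 _ _), by
    simpa [mean, hW.2, hP.2] using mean_joint P W fun _ => 1⟩

omit [Fintype X] in
theorem isChannel_Wn {W : X → Y → ℝ} (hW : IsChannel W) (n : ℕ) : IsChannel (Wn W n) :=
  ⟨fun x => (isPMF_prodDist fun i => hW.isPMF (x i)).1,
    fun x => (isPMF_prodDist fun i => hW.isPMF (x i)).2⟩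

theorem mutInf_eq_mean_infoDens (P : X → ℝ) (W : X → Y → ℝ) :
    mutInf P W = mean P fun x => mean (W x) (infoDens P W x) := by
  simp only [mutInf, mean, mul_sum, ← mul_assoc]
  refine sum_congr rfl fun x _ => sum_congr rfl fun y _ => ?_
  split_ifs with h
  · rw [h, zero_mul]
  · rfl

theorem mutInf_eq_negMulLog {P : X → ℝ} (hP : ∀ x, 0 ≤ P x) {W : X → Y → ℝ}
    (hW : ∀ x y, 0 ≤ W x y) :
    mutInf P W = ∑ y, (negMulLog (outDist P W y) - ∑ x, P x * negMulLog (W x y)) := by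
  have summand : ∀ x y, P x * (W x y * infoDens P W x y)
      = P x * W x y * -log (outDist P W y) - P x * negMulLog (W x y) := fun x y => by
    rcases (mul_nonneg (hP x) (hW x y)).eq_or_lt with h0 | h0
    · rcases mul_eq_zero.1 h0.symm with h | h <;> simp [h]
    · have hout : 0 < outDist P W y := h0.trans_le (mul_le_outDist hP hW x y)
      rw [infoDens, log_div (right_ne_zero_of_mul h0.ne') hout.ne', negMulLog]
      ring
  simp only [mutInf_eq_mean_infoDens, mean, mul_sum, summand]
  rw [sum_comm]
  refine sum_congr rfl fun y _ => ?_
  rw [sum_sub_distrib, ← sum_mul, negMulLog, neg_mul_comm, outDist]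

theorem continuousOn_mutInf {W : X → Y → ℝ} (hW : ∀ x y, 0 ≤ W x y) :
    ContinuousOn (fun P => mutInf P W) {P : X → ℝ | IsPMF P} := by
  have h : Continuous fun P : X → ℝ =>
      ∑ y, (negMulLog (outDist P W y) - ∑ x, P x * negMulLog (W x y)) := by
    unfold outDist
    have := continuous_negMulLog
    fun_prop
  exact h.continuousOn.congr fun P hP => mutInf_eq_negMulLog hP.1 hW

theorem mutInf_nonneg {P : X → ℝ} (hP : IsPMF P) {W : X → Y → ℝ} (hW : ∀ x y, 0 ≤ W x y) :
    0 ≤ mutInf P W := by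
  rw [mutInf_eq_negMulLog hP.1 hW]
  exact sum_nonneg fun y _ => sub_nonneg.2
    (concaveOn_negMulLog.le_map_sum (fun x _ => hP.1 x) hP.2 fun x _ => hW x y)

end MutualInformation

section EmpiricalDistribution

variable {ι U V : Type*}

/-- The empirical distribution of the letters `x v`, `v ∈ s`. With `s = univ` this is the type of
a word, or the input law of a codebook; it vanishes identically for `s = ∅`. -/
def empDist (s : Finset ι) (x : ι → U) (u : U) : ℝ := #{v ∈ s | x v = u} / #s

variable [Fintype U]

theorem mean_empDist (s : Finset ι) (x : ι → U) (g : U → ℝ) :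
    mean (empDist s x) g = (∑ v ∈ s, g (x v)) / #s := by
  simp only [mean, empDist, div_mul_eq_mul_div, ← sum_div, card_filter, Nat.cast_sum, sum_mul]
  rw [sum_comm]
  simp

theorem isPMF_empDist {s : Finset ι} (hs : s.Nonempty) (x : ι → U) : IsPMF (empDist s x) := by
  refine ⟨fun u => by unfold empDist; positivity, ?_⟩
  have : (#s : ℝ) ≠ 0 := by exact_mod_cast hs.card_pos.ne'
  simpa [mean, this] using mean_empDist s x fun _ => 1

variable [Fintype ι] [DecidableEq ι] [Nonempty ι]

theorem mean_empDist_sub_mean_sq_le {Q : U → ℝ} (hQ : IsPMF Q) (g : U → ℝ) :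
    mean (prodDist fun _ : ι => Q) (fun x => (mean (empDist univ x) g - mean Q g) ^ 2)
      ≤ mean Q (fun u => g u ^ 2) / Fintype.card ι := by
  have hι : (Fintype.card ι : ℝ) ≠ 0 := by exact_mod_cast Fintype.card_ne_zero
  have h := mean_prodDist_sum_sub_sq_le (ι := ι) (fun _ => hQ) fun _ => g
  have scale : ∀ x : ι → U, (mean (empDist univ x) g - mean Q g) ^ 2
      = ((Fintype.card ι : ℝ) ^ 2)⁻¹ * (∑ i, g (x i) - ∑ _i : ι, mean Q g) ^ 2 := fun x => by
    rw [mean_empDist, sum_const, card_univ, nsmul_eq_mul]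
    field_simp
  simp only [scale, mean_const_mul]
  refine (mul_le_mul_of_nonneg_left h (by positivity)).trans_eq ?_
  rw [sum_const, card_univ, nsmul_eq_mul]
  field_simp

theorem mean_abs_mean_empDist_sub_le {Q : U → ℝ} (hQ : IsPMF Q) {g : U → ℝ} (hg : ∀ u, 0 ≤ g u)
    {q Γ ε : ℝ} (hq : 0 ≤ q) (hε : 0 < ε) (hΓ : ∀ u, g u ≤ Γ * q)
    (hcard : Γ ≤ ε ^ 2 * Fintype.card ι) :
    mean (prodDist fun _ : ι => Q) (fun x => |mean (empDist univ x) g - mean Q g|)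
      ≤ ε * ((q + mean Q g) / 2) := by
  have hι : (0 : ℝ) < Fintype.card ι := by exact_mod_cast Fintype.card_pos
  have hP : IsPMF (prodDist fun _ : ι => Q) := isPMF_prodDist fun _ => hQ
  rcases hq.eq_or_lt with rfl | hq
  · obtain rfl : g = 0 := funext fun u => le_antisymm (by simpa using hΓ u) (hg u)
    simp [mean]
  have second_moment : mean Q (fun u => g u ^ 2) / Fintype.card ι ≤ ε ^ 2 * q * mean Q g := by
    rw [div_le_iff₀ hι, ← mean_const_mul, mul_comm, ← mean_const_mul]
    refine mean_mono hQ.1 fun u => ?_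
    have : g u ≤ ε ^ 2 * Fintype.card ι * q := (hΓ u).trans (by gcongr)
    nlinarith [mul_le_mul_of_nonneg_left this (hg u)]
  have am_gm : 2 * (ε * q) * mean (prodDist fun _ : ι => Q)
        (fun x => |mean (empDist univ x) g - mean Q g|)
      ≤ ε ^ 2 * q * mean Q g + (ε * q) ^ 2 := by
    rw [← mean_const_mul]
    refine le_trans (mean_mono hP.1 fun x => ?_) <| (mean_add _ _ _).trans_le <|
      add_le_add ((mean_empDist_sub_mean_sq_le hQ g).trans second_moment) (hP.mean_const _).le
    rw [← sq_abs (_ - _)]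
    linarith [two_mul_le_add_sq |mean (empDist univ x) g - mean Q g| (ε * q)]
  refine le_of_mul_le_mul_left ?_ (by positivity : 0 < 2 * (ε * q))
  linarith

omit [DecidableEq ι] in
theorem exists_soft_covering [Fintype V] {Q : U → ℝ} (hQ : IsPMF Q) {w : U → V → ℝ}
    (hw : ∀ u y, 0 ≤ w u y) (hw1 : ∀ u, ∑ y, w u y ≤ 1) {q : V → ℝ} (hq : ∀ y, 0 ≤ q y)
    (hq1 : ∑ y, q y ≤ 1) {Γ ε : ℝ} (hε : 0 < ε) (hΓ : ∀ u y, w u y ≤ Γ * q y)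
    (hcard : Γ ≤ ε ^ 2 * Fintype.card ι) :
    ∃ x : ι → U, ∑ y, |outDist (empDist univ x) w y - outDist Q w y| ≤ ε := by
  have total : ∑ y, outDist Q w y ≤ 1 := by
    rw [sum_outDist, ← hQ.mean_const 1]
    exact mean_mono hQ.1 hw1
  refine (isPMF_prodDist (ι := ι) fun _ => hQ).exists_le ?_
  calc mean (prodDist fun _ : ι => Q)
        (fun x => ∑ y, |outDist (empDist univ x) w y - outDist Q w y|)
      ≤ ∑ y, ε * ((q y + outDist Q w y) / 2) := by
        rw [mean_sum]
        exact sum_le_sum fun y _ =>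
          mean_abs_mean_empDist_sub_le hQ (fun u => hw u y) (hq y) hε (fun u => hΓ u y) hcard
    _ = ε * ((∑ y, q y + ∑ y, outDist Q w y) / 2) := by
        rw [← mul_sum, ← sum_div, sum_add_distrib]
    _ ≤ ε := mul_le_of_le_one_right hε.le (by linarith)

end EmpiricalDistribution

section Identification

variable {M U V : Type*} [Fintype V]

/-- The error requirements of an identification code in terms of the output laws `q m` of the
messages: `D m` is missed under `q m` with probability at most `l₁`, and accepted under any other
`q m'` with probability at most `l₂`. -/
def IsIDFamily (q : M → V → ℝ) (D : M → Set V) (l₁ l₂ : ℝ) : Prop :=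
  (∀ m, prob (q m) (D m)ᶜ ≤ l₁) ∧ ∀ m m', m ≠ m' → prob (q m) (D m') ≤ l₂

theorem idCodeErr_iff {X Y : Type*} [Fintype X] [Fintype Y] {n : ℕ} {W : X → Y → ℝ}
    {Q : M → (Fin n → X) → ℝ} {D : M → Finset (Fin n → Y)} {l₁ l₂ : ℝ} :
    IDCodeErr n W Q D l₁ l₂
      ↔ IsIDFamily (fun m => outDist (Q m) (Wn W n)) (fun m => (D m : Set (Fin n → Y))) l₁ l₂ := by
  simp only [IsIDFamily, prob_outDist]
  simp only [IDCodeErr, ← coe_compl, prob_coe, mean]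

/-- The channel `w` restricted to inputs in `S` and cut off where it exceeds `Γ * q`. -/
def truncChannel (w : U → V → ℝ) (S : Set U) (Γ : ℝ) (q : V → ℝ) (x : U) (y : V) : ℝ :=
  if x ∈ S ∧ w x y ≤ Γ * q y then w x y else 0

variable {w : U → V → ℝ} {S : Set U} {Γ : ℝ} {q : V → ℝ}

omit [Fintype V] in
theorem truncChannel_nonneg (hw : ∀ x y, 0 ≤ w x y) (x : U) (y : V) :
    0 ≤ truncChannel w S Γ q x y := by
  unfold truncChannel; split_ifs; exacts [hw x y, le_rfl]

omit [Fintype V] in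
theorem truncChannel_le (hw : ∀ x y, 0 ≤ w x y) (x : U) (y : V) :
    truncChannel w S Γ q x y ≤ w x y := by
  unfold truncChannel; split_ifs; exacts [le_rfl, hw x y]

omit [Fintype V] in
theorem truncChannel_le_mul (hq : ∀ y, 0 ≤ Γ * q y) (x : U) (y : V) :
    truncChannel w S Γ q x y ≤ Γ * q y := by
  unfold truncChannel; split_ifs with h; exacts [h.2, hq y]

theorem indicator_sub_le_sum_truncChannel (hw : IsChannel w) {ε : ℝ} (hε : 0 ≤ ε)
    (hS : ∀ x ∈ S, prob (w x) {y | Γ * q y < w x y} ≤ ε) (x : U) :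
    S.indicator 1 x + -ε ≤ ∑ y, truncChannel w S Γ q x y := by
  by_cases hx : x ∈ S
  · have sum_eq : ∑ y, truncChannel w S Γ q x y = prob (w x) {y | Γ * q y < w x y}ᶜ :=
      sum_congr rfl fun y _ => by simp [truncChannel, Set.indicator_apply, hx]
    rw [Set.indicator_of_mem hx, sum_eq, (hw.isPMF x).prob_compl, Pi.one_apply]
    linarith [hS x hx]
  · simpa [truncChannel, hx] using hε

variable [Fintype U]

omit [Fintype V] in
theorem outDist_mono {P : U → ℝ} (hP : ∀ u, 0 ≤ P u) {w w' : U → V → ℝ} (h : ∀ u v, w u v ≤ w' u v)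
    (v : V) : outDist P w v ≤ outDist P w' v :=
  mean_mono hP fun u => h u v

theorem le_prob_outDist_truncChannel {Q : U → ℝ} (hQ : IsPMF Q) (hw : IsChannel w) {ε : ℝ}
    (hε : 0 ≤ ε) (hS : ∀ x ∈ S, prob (w x) {y | Γ * q y < w x y} ≤ ε) (D : Set V) :
    prob Q S - ε - prob (outDist Q w) Dᶜ ≤ prob (outDist Q (truncChannel w S Γ q)) D := by
  have total : prob Q S + -ε ≤ ∑ y, outDist Q (truncChannel w S Γ q) y := by
    rw [sum_outDist, prob_eq_mean, ← hQ.mean_const (-ε), ← mean_add]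
    exact mean_mono hQ.1 (indicator_sub_le_sum_truncChannel hw hε hS)
  linarith [prob_add_prob_compl (outDist Q (truncChannel w S Γ q)) D,
    prob_mono_weights (outDist_mono hQ.1 (truncChannel_le (S := S) (Γ := Γ) (q := q) hw.1)) Dᶜ]

/-- Messages that load `S` heavily need pairwise distinct covering codebooks, and there are only
`card U ^ N` codebooks. -/
theorem card_heavy_messages_le [Fintype M] {Q : M → U → ℝ} (hQ : ∀ m, IsPMF (Q m))
    (hw : IsChannel w) {D : M → Set V} {l ε : ℝ}
    (hID : IsIDFamily (fun m => outDist (Q m) w) D l l) (hq : ∀ y, 0 ≤ q y) (hq1 : ∑ y, q y ≤ 1)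
    (hΓ : 0 ≤ Γ) (hε : 0 < ε) (hS : ∀ x ∈ S, prob (w x) {y | Γ * q y < w x y} ≤ ε)
    {N : ℕ} (hN : 0 < N) (hcard : Γ ≤ ε ^ 2 * N) :
    #{m | 2 * l + 3 * ε < prob (Q m) S} ≤ Fintype.card U ^ N := by
  have : Nonempty (Fin N) := ⟨⟨0, hN⟩⟩
  have covering := fun m => exists_soft_covering (ι := Fin N) (hQ m)
    (truncChannel_nonneg (S := S) (Γ := Γ) (q := q) hw.1)
    (fun x => (sum_le_sum fun y _ => truncChannel_le hw.1 x y).trans (hw.2 x).le) hq hq1 hε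
    (truncChannel_le_mul fun y => mul_nonneg hΓ (hq y)) (by simpa using hcard)
  choose codebook hcodebook using covering
  have close := fun m E => (abs_prob_sub_prob_le _ _ E).trans (hcodebook m)
  have hcodebooks : Fintype.card U ^ N = #(univ : Finset (Fin N → U)) := by simp
  rw [hcodebooks]
  refine card_le_card_of_injOn codebook (fun _ _ => mem_coe.2 (mem_univ _)) ?_
  intro m hm m' _ heq
  by_contra hne
  have accepted := le_prob_outDist_truncChannel (hQ m) hw hε.le hS (D m)
  have rejected := (prob_mono_weights (outDist_mono (hQ m').1
    (truncChannel_le (S := S) (Γ := Γ) (q := q) hw.1)) (D m)).trans (hID.2 m' m (Ne.symm hne))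
  have heavy : 2 * l + 3 * ε < prob (Q m) S := by simpa using hm
  have close_left := (abs_le.1 (close m (D m))).1
  have close_right := (abs_le.1 (close m' (D m))).2
  rw [heq] at close_left
  linarith [hID.1 m]

end Identification

section Types

variable {X Y : Type*}

theorem inv_card_le_empDist {ι : Type*} {s : Finset ι} (x : ι → X) {i : ι} (hi : i ∈ s) :
    (#s : ℝ)⁻¹ ≤ empDist s x (x i) := by
  rw [empDist, inv_eq_one_div]
  gcongr
  exact_mod_cast card_pos.2 ⟨i, by simpa using hi⟩

variable [Fintype X] {n : ℕ}

/-- The types, that is, the empirical distributions of the words of length `n`. -/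
def types (X : Type*) [Fintype X] (n : ℕ) : Finset (X → ℝ) :=
  univ.image fun x : Fin n → X => empDist univ x

theorem empDist_mem_types (x : Fin n → X) : empDist univ x ∈ types X n :=
  mem_image_of_mem _ (mem_univ x)

theorem isPMF_of_mem_types [NeZero n] {P : X → ℝ} (hP : P ∈ types X n) : IsPMF P := by
  obtain ⟨x, -, rfl⟩ := mem_image.1 hP
  exact isPMF_empDist univ_nonempty x

theorem card_types_le (X : Type*) [Fintype X] (n : ℕ) :
    #(types X n) ≤ (n + 1) ^ Fintype.card X := by
  have hlt : ∀ (x : Fin n → X) a, #{i | x i = a} < n + 1 := fun x a =>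
    Nat.lt_succ_of_le ((card_le_univ _).trans (by simp))
  have counts : types X n ⊆ univ.image fun (t : X → Fin (n + 1)) a => ((t a : ℕ) : ℝ) / n := by
    intro P hP
    obtain ⟨x, -, rfl⟩ := mem_image.1 hP
    refine mem_image.2 ⟨fun a => ⟨_, hlt x a⟩, mem_univ _, funext fun a => ?_⟩
    rw [empDist, card_fin]
  refine (card_le_card counts).trans (card_image_le.trans ?_)
  simp

variable [Fintype Y]

theorem abs_infoDens_empDist_le [NeZero n] {W : X → Y → ℝ} (hW : IsChannel W) (x : Fin n → X)
    {i : Fin n} {y : Y} (h0 : 0 < W (x i) y) :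
    |infoDens (empDist univ x) W (x i) y| ≤ log n + ∑ a, ∑ y, |log (W a y)| := by
  have hP := isPMF_empDist univ_nonempty x
  have hn : (1 : ℝ) ≤ n := by exact_mod_cast NeZero.pos n
  have inv_le : (n : ℝ)⁻¹ ≤ empDist univ x (x i) := by
    simpa using inv_card_le_empDist x (mem_univ i)
  have out_ge : (n : ℝ)⁻¹ * W (x i) y ≤ outDist (empDist univ x) W y :=
    (mul_le_mul_of_nonneg_right inv_le h0.le).trans (mul_le_outDist hP.1 hW.1 (x i) y)
  have out_pos : 0 < outDist (empDist univ x) W y := lt_of_lt_of_le (by positivity) out_ge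
  have hout := isPMF_outDist hP hW
  have out_le : outDist (empDist univ x) W y ≤ 1 :=
    hout.2 ▸ single_le_sum (fun y _ => hout.1 y) (mem_univ y)
  have log_le : |log (W (x i) y)| ≤ ∑ a, ∑ y, |log (W a y)| :=
    (single_le_sum (f := fun y => |log (W (x i) y)|) (fun _ _ => abs_nonneg _) (mem_univ y)).trans
      (single_le_sum (f := fun a => ∑ y, |log (W a y)|)
        (fun _ _ => sum_nonneg fun _ _ => abs_nonneg _) (mem_univ (x i)))
  rw [infoDens, abs_le]
  constructor
  · rw [log_div h0.ne' out_pos.ne']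
    linarith [neg_abs_le (log (W (x i) y)), log_nonneg hn, log_nonpos out_pos.le out_le]
  · have ratio_le : W (x i) y / outDist (empDist univ x) W y ≤ n := by
      rw [div_le_iff₀ out_pos]
      rwa [inv_mul_le_iff₀ (by positivity)] at out_ge
    linarith [log_le_log (by positivity) ratio_le, abs_nonneg (log (W (x i) y))]

theorem mean_infoDens_empDist_sq_le [NeZero n] {W : X → Y → ℝ} (hW : IsChannel W)
    (x : Fin n → X) (i : Fin n) :
    mean (W (x i)) (fun y => infoDens (empDist univ x) W (x i) y ^ 2)
      ≤ (log n + ∑ a, ∑ y, |log (W a y)|) ^ 2 := by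
  rw [← (hW.isPMF (x i)).mean_const ((log n + ∑ a, ∑ y, |log (W a y)|) ^ 2)]
  refine sum_le_sum fun y _ => ?_
  rcases (hW.1 (x i) y).eq_or_lt with h0 | h0
  · simp [← h0]
  · exact mul_le_mul_of_nonneg_left
      (sq_le_sq.2 ((abs_infoDens_empDist_le hW x h0).trans (le_abs_self _))) h0.le

theorem sum_mean_infoDens_empDist [NeZero n] (W : X → Y → ℝ) (x : Fin n → X) :
    ∑ i, mean (W (x i)) (infoDens (empDist univ x) W (x i)) = n * mutInf (empDist univ x) W := by
  have hn : (n : ℝ) ≠ 0 := NeZero.ne _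
  rw [mutInf_eq_mean_infoDens, mean_empDist univ x
    fun a => mean (W a) (infoDens (empDist univ x) W a), card_fin]
  field_simp

theorem prob_Wn_infoDens_ge_le [NeZero n] {W : X → Y → ℝ} (hW : IsChannel W) (x : Fin n → X)
    {t : ℝ} (ht : 0 < t) :
    prob (Wn W n x) {y | n * mutInf (empDist univ x) W + t
        ≤ ∑ i, infoDens (empDist univ x) W (x i) (y i)}
      ≤ n * (log n + ∑ a, ∑ y, |log (W a y)|) ^ 2 / t ^ 2 := by
  have chebyshev := chebyshev_prodDist (fun i => hW.isPMF (x i))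
    (fun i => infoDens (empDist univ x) W (x i)) ht (mean_infoDens_empDist_sq_le hW x)
  rw [Fintype.card_fin, sum_mean_infoDens_empDist] at chebyshev
  refine (prob_mono ((isChannel_Wn hW n).1 x) fun y hy _ => ?_).trans chebyshev
  exact (le_sub_iff_add_le'.2 (Set.mem_ofPred_eq ▸ hy)).trans (le_abs_self _)

/-- The uniform mixture of the product output laws induced by the types. It serves as a universal
output measure: up to a polynomial factor it dominates each of them. -/
def typeMixture (W : X → Y → ℝ) (n : ℕ) (y : Fin n → Y) : ℝ :=
  ((n + 1) ^ Fintype.card X : ℝ)⁻¹ * ∑ P ∈ types X n, prodDist (fun _ => outDist P W) y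

section

variable [NeZero n] {W : X → Y → ℝ} (hW : IsChannel W)
include hW

theorem isPMF_prodDist_outDist_of_mem_types {P : X → ℝ} (hP : P ∈ types X n) :
    IsPMF (prodDist fun _ : Fin n => outDist P W) :=
  isPMF_prodDist fun _ => isPMF_outDist (isPMF_of_mem_types hP) hW

theorem typeMixture_nonneg (y : Fin n → Y) : 0 ≤ typeMixture W n y :=
  mul_nonneg (by positivity) <| sum_nonneg fun _ hP =>
    (isPMF_prodDist_outDist_of_mem_types hW hP).1 y

theorem sum_typeMixture_le_one : ∑ y, typeMixture W n y ≤ 1 := by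
  simp only [typeMixture]
  rw [← mul_sum, sum_comm, inv_mul_le_iff₀ (by positivity), mul_one,
    sum_congr rfl fun P hP => (isPMF_prodDist_outDist_of_mem_types hW hP).2]
  simpa using mod_cast card_types_le X n

theorem prodDist_outDist_le_typeMixture (x : Fin n → X) (y : Fin n → Y) :
    prodDist (fun _ => outDist (empDist univ x) W) y
      ≤ (n + 1) ^ Fintype.card X * typeMixture W n y := by
  rw [typeMixture, mul_inv_cancel_left₀ (by positivity)]
  exact single_le_sum (f := fun P => prodDist (fun _ => outDist P W) y)
    (fun P hP => (isPMF_prodDist_outDist_of_mem_types hW hP).1 y) (empDist_mem_types x)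

theorem prob_Wn_excess_le (x : Fin n → X) {t Γ : ℝ} (ht : 0 < t)
    (hΓ : (n + 1) ^ Fintype.card X * exp (n * mutInf (empDist univ x) W + t) ≤ Γ) :
    prob (Wn W n x) {y | Γ * typeMixture W n y < Wn W n x y}
      ≤ n * (log n + ∑ a, ∑ y, |log (W a y)|) ^ 2 / t ^ 2 := by
  have hP := isPMF_empDist univ_nonempty x
  refine le_trans (prob_mono ((isChannel_Wn hW n).1 x) fun y hy hy0 => ?_)
    (prob_Wn_infoDens_ge_le hW x ht)
  have hWi : ∀ i, 0 < W (x i) (y i) := fun i => (hW.1 _ _).lt_of_ne' fun h =>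
    hy0.ne' (prod_eq_zero (mem_univ i) h)
  have hjoint : ∀ i, 0 < empDist univ x (x i) * W (x i) (y i) := fun i =>
    mul_pos (lt_of_lt_of_le (by simpa using NeZero.pos n)
      (inv_card_le_empDist x (mem_univ i))) (hWi i)
  have hout : 0 < prodDist (fun _ => outDist (empDist univ x) W) y := prod_pos fun i _ =>
    (hjoint i).trans_le (mul_le_outDist hP.1 hW.1 _ _)
  refine exp_le_exp.1 (le_of_mul_le_mul_right ?_ hout)
  calc exp (n * mutInf (empDist univ x) W + t) * prodDist (fun _ => outDist (empDist univ x) W) y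
      ≤ exp (n * mutInf (empDist univ x) W + t)
          * ((n + 1) ^ Fintype.card X * typeMixture W n y) := by
        gcongr
        exact prodDist_outDist_le_typeMixture hW x y
    _ ≤ Γ * typeMixture W n y := by
        rw [← mul_assoc, mul_comm (exp _)]
        exact mul_le_mul_of_nonneg_right hΓ (typeMixture_nonneg hW y)
    _ ≤ Wn W n x y := le_of_lt hy
    _ = _ := (exp_sum_infoDens_mul hP.1 hW.1 hjoint).symm

theorem card_low_information_messages_le {M : Type*} [Fintype M] {Q : M → (Fin n → X) → ℝ}
    (hQ : ∀ m, IsPMF (Q m)) {D : M → Finset (Fin n → Y)} {l ε : ℝ} (hε : 0 < ε)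
    (herr : IDCodeErr n W Q D l l) {ρ t : ℝ} (ht : 0 < t)
    (htail : n * (log n + ∑ a, ∑ y, |log (W a y)|) ^ 2 / t ^ 2 ≤ ε) {N : ℕ} (hN : 0 < N)
    (hcard : (n + 1) ^ Fintype.card X * exp (n * ρ + t) ≤ ε ^ 2 * N) :
    #{m | 2 * l + 3 * ε < prob (Q m) {x | mutInf (empDist univ x) W < ρ}}
      ≤ Fintype.card X ^ (n * N) := by
  have h := card_heavy_messages_le (S := {x | mutInf (empDist univ x) W < ρ}) hQ
    (isChannel_Wn hW n) (idCodeErr_iff.1 herr) (typeMixture_nonneg hW) (sum_typeMixture_le_one hW)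
    (by positivity) hε (fun x hx => (prob_Wn_excess_le hW x ht ?_).trans htail) hN hcard
  · simpa [pow_mul] using h
  · have : mutInf (empDist univ x) W ≤ ρ := le_of_lt hx
    gcongr

end

end Types

section Asymptotics

theorem eventually_poly_le_exp (C : ℝ) (d : ℕ) {b : ℝ} (hb : 0 < b) :
    ∀ᶠ n : ℕ in atTop, C * ((n : ℝ) + 1) ^ d ≤ exp (b * n) := by
  have shift := (isLittleO_pow_exp_pos_mul_atTop d hb).comp_tendsto
    (tendsto_atTop_add_const_right atTop (1 : ℝ) tendsto_natCast_atTop_atTop)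
  filter_upwards [(shift.const_mul_left (exp b * C)).def one_pos] with n hn
  have hn' := (le_abs_self _).trans (norm_eq_abs (_ * _) ▸ hn)
  simp only [Function.comp_apply, norm_eq_abs, abs_exp, one_mul] at hn'
  rw [mul_add_one, exp_add, mul_comm (exp _) (exp b), mul_assoc] at hn'
  exact le_of_mul_le_mul_left hn' (exp_pos b)

theorem tendsto_log_add_sq_div (c : ℝ) :
    Tendsto (fun n : ℕ => (log n + c) ^ 2 / (n : ℝ)) atTop (𝓝 0) := by
  have log_pow : ∀ k : ℕ, Tendsto (fun n : ℕ => log n ^ k / (n : ℝ)) atTop (𝓝 0) := fun k => by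
    simpa [Function.comp_def] using (tendsto_pow_log_div_mul_add_atTop 1 0 k one_ne_zero).comp
      tendsto_natCast_atTop_atTop
  have h := ((log_pow 2).add ((log_pow 1).const_mul (2 * c))).add ((log_pow 0).const_mul (c ^ 2))
  simp only [mul_zero, add_zero] at h
  refine h.congr fun n => ?_
  ring

/-- The requirement that the size `k` of a message set has identification rate at least `R` at
block length `n`; rate `0` is reserved for a single message. -/
def HasIDRate (n k : ℕ) (R : ℝ) : Prop :=
  (0 < R → R ≤ (1 / n) * log (log k)) ∧ (R = 0 → k = 1)

variable {n k : ℕ} {R : ℝ}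

theorem HasIDRate.exp_mul_le_log [NeZero n] (h : HasIDRate n k R) (hR : 0 < R) :
    exp (n * R) ≤ log k := by
  have hn : (0 : ℝ) < n := by exact_mod_cast NeZero.pos n
  have hlog : n * R ≤ log (log k) := by
    have := h.1 hR
    rwa [one_div, inv_mul_eq_div, le_div_iff₀' hn] at this
  have hk : log k ≠ 0 := fun h0 => by
    rw [h0, log_zero] at hlog
    exact hlog.not_gt (by positivity)
  exact (le_log_iff_exp_le ((log_natCast_nonneg k).lt_of_ne' hk)).1 hlog

theorem HasIDRate.pos [NeZero n] (h : HasIDRate n k R) (hR : 0 ≤ R) : 0 < k := by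
  rcases hR.eq_or_lt with h0 | h0
  · simp [h.2 h0.symm]
  · refine Nat.pos_of_ne_zero fun hk => (exp_pos (n * R)).not_ge ?_
    simpa [hk] using h.exp_mul_le_log h0

theorem eventually_mul_pow_le (d : ℕ) [NeZero d] {δ : ℝ} (hR : 0 < R) (hδ : 0 < δ) :
    ∀ᶠ n : ℕ in atTop, ∀ k : ℕ, 0 < k → exp (n * R) ≤ log k →
      10 * (d : ℝ) ^ (n * ⌈exp (n * (R - δ))⌉₊) ≤ k := by
  have hL : 0 ≤ log d := log_natCast_nonneg d
  filter_upwards [eventually_poly_le_exp (2 * (log 10 + log d)) 1 hR,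
    eventually_poly_le_exp (2 * log d) 1 hδ] with n hconst hlin k hk hrate
  have hd : (0 : ℝ) < d := by exact_mod_cast NeZero.pos d
  rw [← log_le_log_iff (by positivity) (by exact_mod_cast hk),
    log_mul (by norm_num) (by positivity), log_pow]
  calc log 10 + ((n * ⌈exp (n * (R - δ))⌉₊ : ℕ) : ℝ) * log d
      ≤ log 10 + n * (exp (n * (R - δ)) + 1) * log d := by
        push_cast
        gcongr
        exact (Nat.ceil_lt_add_one (exp_pos _).le).le
    _ ≤ (log 10 + log d) * (n + 1) + log d * (n + 1) * exp (n * (R - δ)) := by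
        have : 0 ≤ log 10 * n := by positivity
        have : 0 ≤ log d * exp (n * (R - δ)) := by positivity
        linarith
    _ ≤ exp (R * n) / 2 + exp (δ * n) / 2 * exp (n * (R - δ)) := by
        gcongr <;> linarith
    _ = exp (n * R) := by
        rw [div_mul_eq_mul_div, ← exp_add, show δ * n + n * (R - δ) = n * R by ring, mul_comm R]
        ring
    _ ≤ log k := hrate

end Asymptotics

section Mixture

variable {M U V : Type*} [Fintype M]

/-- The uniform mixture of the distributions `Q m`. -/
def mixture (Q : M → U → ℝ) : U → ℝ := outDist (fun _ => (Fintype.card M : ℝ)⁻¹) Q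

theorem mixture_apply (Q : M → U → ℝ) (u : U) :
    mixture Q u = (Fintype.card M : ℝ)⁻¹ * ∑ m, Q m u := by
  rw [mixture, outDist, mul_sum]

theorem mixture_mixture_comm {M' : Type*} [Fintype M'] (Q : M → M' → U → ℝ) :
    (mixture fun m => mixture (Q m)) = mixture fun m' => mixture fun m => Q m m' := by
  ext u
  simp only [mixture_apply, mul_sum]
  rw [sum_comm]
  simp only [mul_left_comm]

theorem isPMF_uniform [Nonempty M] : IsPMF fun _ : M => (Fintype.card M : ℝ)⁻¹ :=
  ⟨fun _ => by positivity, by simp⟩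

variable [Fintype U]

theorem isPMF_mixture [Nonempty M] {Q : M → U → ℝ} (hQ : ∀ m, IsPMF (Q m)) :
    IsPMF (mixture Q) :=
  isPMF_outDist isPMF_uniform ⟨fun m => (hQ m).1, fun m => (hQ m).2⟩

theorem prob_mixture_le [Nonempty M] {Q : M → U → ℝ} (hQ : ∀ m, IsPMF (Q m)) (E : Set U) {c : ℝ}
    (hc : 0 ≤ c) : prob (mixture Q) E ≤ c + #{m | c < prob (Q m) E} / Fintype.card M := by
  have bound : ∀ m, prob (Q m) E ≤ c + {m | c < prob (Q m) E}.indicator 1 m := fun m => by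
    by_cases h : c < prob (Q m) E
    · simpa [h] using ((hQ m).prob_le_one E).trans (le_add_of_nonneg_left hc)
    · simpa [h] using not_lt.1 h
  rw [mixture, prob_outDist]
  refine (mean_mono isPMF_uniform.1 bound).trans_eq ?_
  rw [mean_add, isPMF_uniform.mean_const, mean]
  simp [Set.indicator_apply, div_eq_mul_inv, sum_ite]

end Mixture

section Converse

variable {X Y Z : Type*} [Fintype Y] [Fintype Z]

theorem isChannel_margY {W : X → Y → Z → ℝ} (hW : IsBC W) : IsChannel (margY W) :=
  ⟨fun x y => sum_nonneg fun z _ => hW.1 x y z, hW.2⟩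

theorem isChannel_margZ {W : X → Y → Z → ℝ} (hW : IsBC W) : IsChannel (margZ W) :=
  ⟨fun x z => sum_nonneg fun y _ => hW.1 x y z, fun x => sum_comm.trans (hW.2 x)⟩

variable [Fintype X]

theorem isBCIDCode_iff {n kY kZ : ℕ} {W : X → Y → Z → ℝ} {Q : Fin kY → Fin kZ → (Fin n → X) → ℝ}
    {DY : Fin kY → Finset (Fin n → Y)} {DZ : Fin kZ → Finset (Fin n → Z)} {l₁ l₂ l₃ l₄ : ℝ} :
    IsBCIDCode n kY kZ W Q DY DZ l₁ l₂ l₃ l₄ ↔ (∀ i j, IsPMF (Q i j)) ∧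
      IDCodeErr n (margY W) (fun i => mixture (Q i)) DY l₁ l₂ ∧
      IDCodeErr n (margZ W) (fun j => mixture fun i => Q i j) DZ l₃ l₄ := by
  have hmix : ∀ {k : ℕ} (q : Fin k → (Fin n → X) → ℝ),
      mixture q = fun x => (k : ℝ)⁻¹ * ∑ i, q i x := fun q => by
    ext x
    rw [mixture_apply, Fintype.card_fin]
  simp only [hmix]
  rfl

omit [Fintype Z]

theorem eventually_card_low_information_le [Nonempty X] {W : X → Y → ℝ} (hW : IsChannel W)
    {R δ : ℝ} (hR : 0 < R) (hδ : 0 < δ) :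
    ∀ᶠ n : ℕ in atTop, ∀ (k : ℕ) (Q : Fin k → (Fin n → X) → ℝ) (D : Fin k → Finset (Fin n → Y)),
      (∀ m, IsPMF (Q m)) → IDCodeErr n W Q D (1 / 20) (1 / 20) → HasIDRate n k R →
      (10 * #{m | 1 / 4 < prob (Q m) {x | mutInf (empDist univ x) W < R - δ}} : ℝ) ≤ k := by
  have : NeZero (Fintype.card X) := ⟨Fintype.card_ne_zero⟩
  set c := ∑ a, ∑ y, |log (W a y)|
  filter_upwards [eventually_gt_atTop 0, eventually_mul_pow_le (Fintype.card X) hR (half_pos hδ),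
    eventually_poly_le_exp 400 (Fintype.card X) (by positivity : 0 < δ / 4),
    (tendsto_log_add_sq_div c).eventually_le_const (by positivity : 0 < δ ^ 2 / 320)]
    with n hn hmany hpoly hlog k Q D hQ herr hrate
  have : NeZero n := ⟨hn.ne'⟩
  have htail : (n : ℝ) * (log n + c) ^ 2 / (n * δ / 4) ^ 2 ≤ 1 / 20 :=
    calc (n : ℝ) * (log n + c) ^ 2 / (n * δ / 4) ^ 2
        = 16 / δ ^ 2 * ((log n + c) ^ 2 / n) := by field_simp; ring
      _ ≤ 16 / δ ^ 2 * (δ ^ 2 / 320) := by gcongr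
      _ = 1 / 20 := by field_simp; norm_num
  have hsize : (n + 1) ^ Fintype.card X * exp (n * (R - δ) + n * δ / 4)
      ≤ (1 / 20) ^ 2 * ⌈exp (n * (R - δ / 2))⌉₊ := by
    have : 400 * (n + 1 : ℝ) ^ Fintype.card X * exp (n * (R - δ) + n * δ / 4)
        ≤ ⌈exp (n * (R - δ / 2))⌉₊ :=
      calc _ ≤ exp (δ / 4 * n) * exp (n * (R - δ) + n * δ / 4) := by gcongr
        _ = exp (n * (R - δ / 2)) := by rw [← exp_add]; ring_nf
        _ ≤ _ := Nat.le_ceil _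
    linarith
  have hfew := card_low_information_messages_le hW hQ (by norm_num) herr (by positivity) htail
    (Nat.ceil_pos.2 (exp_pos (n * (R - δ / 2)))) hsize
  norm_num only at hfew
  refine le_trans ?_ (hmany k (hrate.pos hR.le) (hrate.exp_mul_le_log hR))
  exact_mod_cast Nat.mul_le_mul_left 10 hfew

theorem eventually_prob_low_information_le [Nonempty X] {W : X → Y → ℝ} (hW : IsChannel W)
    {R δ : ℝ} (hR : 0 ≤ R) (hδ : 0 < δ) :
    ∀ᶠ n : ℕ in atTop, ∀ (k : ℕ) (Q : Fin k → (Fin n → X) → ℝ) (D : Fin k → Finset (Fin n → Y)),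
      (∀ m, IsPMF (Q m)) → IDCodeErr n W Q D (1 / 20) (1 / 20) → HasIDRate n k R →
      prob (mixture Q) {x | mutInf (empDist univ x) W < R - δ} ≤ 2 / 5 := by
  rcases hR.eq_or_lt with rfl | hR
  · filter_upwards [eventually_gt_atTop 0] with n hn k Q D _ _ _
    have : NeZero n := ⟨hn.ne'⟩
    have empty : {x : Fin n → X | mutInf (empDist univ x) W < 0 - δ} = ∅ :=
      Set.eq_empty_of_forall_notMem fun x hx => by
        linarith [mutInf_nonneg (isPMF_empDist univ_nonempty x) hW.1, show _ < 0 - δ from hx]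
    rw [empty]
    norm_num [prob]
  · filter_upwards [eventually_gt_atTop 0, eventually_card_low_information_le hW hR hδ]
      with n hn hfew k Q D hQ herr hrate
    have : NeZero n := ⟨hn.ne'⟩
    have hk := hrate.pos hR.le
    have : Nonempty (Fin k) := ⟨⟨0, hk⟩⟩
    have hk' : (0 : ℝ) < k := by exact_mod_cast hk
    have few : (#{m | 1 / 4 < prob (Q m) {x | mutInf (empDist univ x) W < R - δ}} : ℝ)
        / Fintype.card (Fin k) ≤ 1 / 10 := by
      rw [Fintype.card_fin, div_le_iff₀ hk']
      linarith [hfew k Q D hQ herr hrate]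
    linarith [prob_mixture_le hQ {x | mutInf (empDist univ x) W < R - δ}
      (by norm_num : (0 : ℝ) ≤ 1 / 4)]

theorem BCAchievable.exists_isPMF [Fintype Z] [Nonempty X] {W : X → Y → Z → ℝ} (hW : IsBC W)
    {R : ℝ × ℝ} (h : BCAchievable W R) {δ : ℝ} (hδ : 0 < δ) :
    ∃ P : X → ℝ, IsPMF P ∧ R.1 - δ ≤ mutInf P (margY W) ∧ R.2 - δ ≤ mutInf P (margZ W) := by
  obtain ⟨hR₁, hR₂, hcode⟩ := h
  have l_pos : (0 : ℝ) < 1 / 20 := by norm_num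
  obtain ⟨n₀, hn₀⟩ := hcode _ _ _ _ l_pos l_pos l_pos l_pos
  obtain ⟨n, lowY, lowZ, hn, hnn⟩ :=
    ((eventually_prob_low_information_le (isChannel_margY hW) hR₁ hδ).and
      ((eventually_prob_low_information_le (isChannel_margZ hW) hR₂ hδ).and
        ((eventually_gt_atTop 0).and (eventually_ge_atTop n₀)))).exists
  have : NeZero n := ⟨hn.ne'⟩
  obtain ⟨kY, kZ, Q, DY, DZ, code, rateY, rateZ⟩ := hn₀ n hnn
  obtain ⟨hQ, errY, errZ⟩ := isBCIDCode_iff.1 code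
  have : Nonempty (Fin kY) := ⟨⟨0, HasIDRate.pos rateY hR₁⟩⟩
  have : Nonempty (Fin kZ) := ⟨⟨0, HasIDRate.pos rateZ hR₂⟩⟩
  have hQY := fun i => isPMF_mixture (hQ i)
  have hY := lowY kY _ DY hQY errY rateY
  have hZ := lowZ kZ _ DZ (fun j => isPMF_mixture fun i => hQ i j) errZ rateZ
  rw [← mixture_mixture_comm] at hZ
  have hmix := isPMF_mixture hQY
  obtain ⟨x, hx⟩ := hmix.exists_notMem
    ((prob_union_le hmix.1 _ _).trans_lt ((add_le_add hY hZ).trans_lt (by norm_num)))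
  rw [Set.mem_union, not_or] at hx
  exact ⟨empDist univ x, isPMF_empDist univ_nonempty x, not_lt.1 hx.1, not_lt.1 hx.2⟩

end Converse

section RandomCoding

variable {ι U V I : Type*} [Fintype ι] [DecidableEq ι] [Fintype V]

/-- The decoding set obtained by merging the decoding sets of the pool words indexed by `s`. -/
def decoder (G : U → Set V) (x : ι → U) (s : Finset ι) : Set V := ⋃ v ∈ s, G (x v)

/-- The index sets `S m` have `M` elements each and pairwise share at most a fraction `ε`. -/
def AlmostDisjoint (S : I → Finset ι) (ε : ℝ) (M : ℕ) : Prop :=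
  (∀ m, #(S m) = M) ∧ ∀ m m', m ≠ m' → #(S m ∩ S m') ≤ ε * M

omit [Fintype ι] [DecidableEq ι] in
theorem mul_prob_decoder_le {q : V → ℝ} (hq : ∀ y, 0 ≤ q y) {G : U → Set V} {s : Finset ι} {τ : ℝ}
    (hτ : 0 ≤ τ) (hG : ∀ u, #s * prob q (G u) ≤ τ) (x : ι → U) : prob q (decoder G x s) ≤ τ := by
  rcases s.eq_empty_or_nonempty with rfl | hs
  · simpa [decoder, prob] using hτ
  have hs0 : (0 : ℝ) < #s := by exact_mod_cast hs.card_pos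
  calc prob q (decoder G x s) ≤ ∑ v ∈ s, prob q (G (x v)) := prob_biUnion_le hq s fun v => G (x v)
    _ ≤ ∑ _v ∈ s, τ / #s := sum_le_sum fun v _ => (le_div_iff₀' hs0).2 (hG (x v))
    _ = τ := by rw [sum_const, nsmul_eq_mul, mul_div_cancel₀ _ hs0.ne']

omit [Fintype ι] [DecidableEq ι] in
theorem prob_outDist_empDist [Fintype U] (s : Finset ι) (x : ι → U) (w : U → V → ℝ) (E : Set V) :
    prob (outDist (empDist s x) w) E = (∑ v ∈ s, prob (w (x v)) E) / #s := by
  rw [prob_outDist, mean_empDist]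

variable [Fintype U] {p : U → ℝ} {w : U → V → ℝ} {G : U → Set V} {ε M : ℝ}

/-- The decoding sets `G` rarely miss words drawn from `p`, and are small enough for the union of
`M` of them to be unlikely under the output distribution. -/
def SmallError (p : U → ℝ) (w : U → V → ℝ) (G : U → Set V) (ε M : ℝ) : Prop :=
  mean p (fun u => prob (w u) (G u)ᶜ) ≤ exp (-(2 / ε)) ∧
  ∀ u, M * prob (outDist p w) (G u) ≤ exp (-(2 / ε))

/-- Conditioning on the words in `s'` fixes the decoding set, and the words outside `s'` are still
independent of it. -/
theorem prob_false_identification_le (hp : IsPMF p) (hw : IsChannel w) (hε : 0 < ε)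
    {s s' : Finset ι} (hs : #s ≤ M)
    (hG : ∀ u, #s' * prob (outDist p w) (G u) ≤ exp (-(2 / ε))) :
    prob (prodDist fun _ : ι => p)
      {x | ε * M ≤ ∑ v ∈ s \ s', prob (w (x v)) (decoder G x s')} ≤ exp (-M) := by
  refine prob_prodDist_le_of_piecewise (fun _ => hp) s' fun a => ?_
  have rejected : mean p (fun u => prob (w u) (decoder G a s')) ≤ exp (-(2 / ε)) := by
    rw [← prob_outDist]
    exact mul_prob_decoder_le (outDist_nonneg hp.1 hw.1) (exp_pos _).le hG a
  have hcard : (#(s \ s') : ℝ) ≤ M := le_trans (by gcongr; exact sdiff_subset) hs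
  convert chernoff_prodDist (f := fun _ : ι => fun u => prob (w u) (decoder G a s')) (fun _ => hp)
    (fun _ u => prob_nonneg (hw.1 u) _) (fun _ u => (hw.isPMF u).prob_le_one _) hε
    (by rw [← exp_add]; simp) (fun _ => rejected) hcard using 2
  ext b
  have decoder_eq : decoder G (s'.piecewise a b) s' = decoder G a s' :=
    Set.iUnion₂_congr fun v hv => by rw [piecewise_eq_of_mem _ _ _ hv]
  have sum_eq : ∑ v ∈ s \ s', prob (w (s'.piecewise a b v)) (decoder G a s')
      = ∑ v ∈ s \ s', prob (w (b v)) (decoder G a s') :=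
    sum_congr rfl fun v hv => by rw [piecewise_eq_of_notMem _ _ _ (mem_sdiff.1 hv).2]
  simp only [Set.mem_ofPred_eq, decoder_eq, sum_eq]

omit [Fintype ι] in
theorem isIDFamily_of_sum_lt (hw : IsChannel w) {M : ℕ} (hM : 0 < M) {S : I → Finset ι}
    (hS : AlmostDisjoint S ε M) {x : ι → U}
    (miss : ∀ m, ∑ v ∈ S m, prob (w (x v)) (G (x v))ᶜ < ε * M)
    (false_id : ∀ m m', ∑ v ∈ S m \ S m', prob (w (x v)) (decoder G x (S m')) < ε * M) :
    IsIDFamily (fun m => outDist (empDist (S m) x) w) (fun m => decoder G x (S m)) ε (2 * ε) := by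
  have hM0 : (0 : ℝ) < M := by exact_mod_cast hM
  simp only [IsIDFamily, prob_outDist_empDist, hS.1, div_le_iff₀ hM0]
  refine ⟨fun m => (sum_le_sum fun v hv => ?_).trans (miss m).le, fun m m' hne => ?_⟩
  · exact prob_mono (hw.1 _) fun y hy _ hG => hy (Set.mem_biUnion hv hG)
  · have overlap : ∑ v ∈ S m ∩ S m', prob (w (x v)) (decoder G x (S m')) ≤ ε * M :=
      (sum_le_sum fun v _ => (hw.isPMF (x v)).prob_le_one _).trans (by simpa using hS.2 m m' hne)
    rw [← sum_inter_add_sum_sdiff (S m) (S m')]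
    linarith [false_id m m']

theorem prob_not_isIDFamily_le [Fintype I] (hp : IsPMF p) (hw : IsChannel w) (hε : 0 < ε) {M : ℕ}
    (hM : 0 < M) (hG : SmallError p w G ε M) {S : I → Finset ι} (hS : AlmostDisjoint S ε M) :
    prob (prodDist fun _ : ι => p)
        {x | ¬ IsIDFamily (fun m => outDist (empDist (S m) x) w) (fun m => decoder G x (S m))
          ε (2 * ε)}
      ≤ (Fintype.card I + (Fintype.card I : ℝ) ^ 2) * exp (-M) := by
  have hP := (isPMF_prodDist fun _ : ι => hp).1
  let bad : I ⊕ I × I → Set (ι → U) := Sum.elim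
    (fun m => {x | ε * M ≤ ∑ v ∈ S m, prob (w (x v)) (G (x v))ᶜ})
    fun m => {x | ε * M ≤ ∑ v ∈ S m.1 \ S m.2, prob (w (x v)) (decoder G x (S m.2))}
  have prob_bad : ∀ k, prob (prodDist fun _ : ι => p) (bad k) ≤ exp (-M)
    | .inl m => chernoff_prodDist (fun _ => hp) (fun _ u => prob_nonneg (hw.1 u) _)
        (fun _ u => (hw.isPMF u).prob_le_one _) hε (by rw [← exp_add]; simp) (fun _ => hG.1)
        (by rw [hS.1])
    | .inr m => prob_false_identification_le hp hw hε (by rw [hS.1]) (by rw [hS.1]; exact hG.2)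
  calc _ ≤ prob (prodDist fun _ : ι => p) (⋃ k ∈ univ, bad k) := by
        refine prob_mono hP fun x hx _ => ?_
        by_contra hgood
        simp only [mem_univ, Set.iUnion_true, Set.mem_iUnion, not_exists] at hgood
        exact hx (isIDFamily_of_sum_lt hw hM hS (fun m => not_le.1 (hgood (.inl m)))
          fun m m' => not_le.1 (hgood (.inr (m, m'))))
    _ ≤ ∑ k, prob (prodDist fun _ : ι => p) (bad k) := prob_biUnion_le hP univ bad
    _ ≤ ∑ _k : I ⊕ I × I, exp (-M) := sum_le_sum fun k _ => prob_bad k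
    _ = _ := by simp [sq]

end RandomCoding

section BalancedDesigns

variable {I K L U : Type*} [Fintype K]

/-- The graph of a function on a finite type. -/
def graph (f : K → L) : Finset (K × L) :=
  univ.map ⟨fun κ => (κ, f κ), fun _ _ h => congrArg Prod.fst h⟩

theorem mem_graph {f : K → L} {v : K × L} : v ∈ graph f ↔ f v.1 = v.2 := by
  simp only [graph, Finset.mem_map, mem_univ, true_and]
  exact ⟨by rintro ⟨κ, rfl⟩; rfl, fun h => ⟨v.1, Prod.ext rfl h⟩⟩

theorem card_graph_inter_graph_le [DecidableEq K] [DecidableEq L] (f g : K → L) :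
    #(graph f ∩ graph g) ≤ #{κ | f κ = g κ} := by
  refine card_le_card_of_injOn Prod.fst (fun v hv => ?_) fun v hv v' hv' h => ?_
  · obtain ⟨hf, hg⟩ := mem_inter.1 hv
    simpa using (mem_graph.1 hf).trans (mem_graph.1 hg).symm
  · refine Prod.ext h ?_
    rw [← mem_graph.1 (mem_inter.1 hv).1, ← mem_graph.1 (mem_inter.1 hv').1, h]

theorem empDist_graph (f : K → L) (x : K × L → U) :
    empDist (graph f) x = empDist univ fun κ => x (κ, f κ) := by
  ext u
  simp only [empDist, graph, card_filter, sum_map, card_map]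
  rfl

theorem empDist_graph_product {C : Type*} [Fintype C] (f : K → L) (x : (K × L) × C → U) :
    empDist (graph f ×ˢ univ) x = empDist univ fun v : K × C => x ((v.1, f v.1), v.2) := by
  ext u
  simp only [empDist, graph, card_filter, sum_product, sum_map, card_product, card_map,
    card_univ, Fintype.card_prod, Fintype.sum_prod_type]
  rfl

theorem almostDisjoint_graph [DecidableEq K] [DecidableEq L] {T : I → K → L} {ε : ℝ}
    (hT : ∀ m m', m ≠ m' → #{κ | T m κ = T m' κ} ≤ ε * Fintype.card K) :
    AlmostDisjoint (fun m => graph (T m)) ε (Fintype.card K) :=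
  ⟨fun m => by simp [graph], fun m m' h =>
    (Nat.cast_le.2 (card_graph_inter_graph_le _ _)).trans (hT m m' h)⟩

theorem AlmostDisjoint.product_univ {ι C : Type*} [DecidableEq ι] [DecidableEq C] [Fintype C]
    {S : I → Finset ι} {ε : ℝ} {M : ℕ} (hS : AlmostDisjoint S ε M) :
    AlmostDisjoint (fun m => S m ×ˢ (univ : Finset C)) ε (M * Fintype.card C) := by
  refine ⟨fun m => by rw [card_product, hS.1, card_univ], fun m m' h => ?_⟩
  rw [← inter_product, card_product, card_univ, Nat.cast_mul, Nat.cast_mul, ← mul_assoc]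
  exact mul_le_mul_of_nonneg_right (hS.2 m m' h) (Nat.cast_nonneg _)

theorem prob_uniform_agreement_le [DecidableEq K] [DecidableEq L] [Fintype L] [Nonempty L]
    {ε : ℝ} (hε : 0 < ε) (hL : exp (2 / ε) ≤ Fintype.card L) (f : K → L) :
    prob (prodDist fun _ : K => fun _ : L => (Fintype.card L : ℝ)⁻¹)
      {t | ε * Fintype.card K ≤ #{κ | t κ = f κ}} ≤ exp (-Fintype.card K) := by
  have hL0 : (0 : ℝ) < Fintype.card L := by exact_mod_cast Fintype.card_pos
  have h := chernoff_prodDist (f := fun κ l => if l = f κ then (1 : ℝ) else 0)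
    (fun _ : K => isPMF_uniform (M := L)) (fun _ _ => by split_ifs <;> norm_num)
    (fun _ _ => by split_ifs <;> norm_num) hε
    ((le_div_iff₀ (inv_pos.2 hL0)).1 (by simpa using hL)) (fun κ => by simp [mean])
    (V := univ) le_rfl
  simpa only [sum_boole, card_univ] using h

/-- The Gilbert–Varshamov argument: a random function agrees too much with some shift of an earlier
one only with small probability. -/
theorem exists_separated_family [DecidableEq L] [Fintype L] [AddCommGroup L]
    {ε : ℝ} (hε : 0 < ε) (hL : exp (2 / ε) ≤ Fintype.card L) (N : ℕ)
    (hN : N * Fintype.card L * exp (-Fintype.card K) < 1) :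
    ∃ T : Fin N → K → L, ∀ i j, i ≠ j → ∀ c, #{κ | T i κ = T j κ + c} ≤ ε * Fintype.card K := by
  induction N with
  | zero => exact ⟨fun i => i.elim0, fun i => i.elim0⟩
  | succ N ih =>
    have hN' : N * Fintype.card L * exp (-Fintype.card K) < 1 :=
      lt_of_le_of_lt (by gcongr; exact N.le_succ) hN
    obtain ⟨T, hT⟩ := ih hN'
    have hP := isPMF_prodDist fun _ : K => isPMF_uniform (M := L)
    obtain ⟨t, ht⟩ := hP.exists_notMem
      (E := ⋃ k ∈ univ, {t | ε * Fintype.card K ≤ #{κ | t κ = T (k : Fin N × L).1 κ + k.2}}) <|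
        calc _ ≤ _ := prob_biUnion_le hP.1 _ _
          _ ≤ ∑ _k : Fin N × L, exp (-Fintype.card K) :=
              sum_le_sum fun k _ => prob_uniform_agreement_le hε hL fun κ => T k.1 κ + k.2
          _ < 1 := by simpa using hN'
    simp only [mem_univ, Set.iUnion_true, Set.mem_iUnion, not_exists, Set.mem_ofPred_eq,
      not_le] at ht
    refine ⟨Fin.cons t T, fun i j hij c => ?_⟩
    cases i using Fin.cases with
    | zero =>
      obtain ⟨j, rfl⟩ := Fin.exists_succ_eq.2 hij.symm
      simpa using (ht (j, c)).le
    | succ i =>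
      cases j using Fin.cases with
      | zero =>
        have symm : ∀ κ, T i κ = t κ + c ↔ t κ = T i κ + -c := fun κ => by
          rw [← sub_eq_add_neg, eq_sub_iff_add_eq, eq_comm]
        simpa [symm] using (ht (i, -c)).le
      | succ j => simpa using hT i j (fun h => hij (congrArg Fin.succ h)) c

variable [Fintype I] [Fintype L]

/-- Each value `T m κ` is uniformly distributed for a uniformly chosen `m`. -/
def IsBalanced (T : I → K → L) : Prop :=
  ∀ κ (g : L → ℝ), (∑ m, g (T m κ)) / Fintype.card I = (∑ l, g l) / Fintype.card L

theorem IsBalanced.mixture_empDist {T : I → K → L} (hT : IsBalanced T) (x : K × L → U) :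
    mixture (fun m => empDist univ fun κ => x (κ, T m κ)) = empDist univ x := by
  ext u
  let hit (κ : K) (l : L) : ℝ := if x (κ, l) = u then 1 else 0
  simp only [mixture_apply, empDist, card_filter, Nat.cast_sum, Nat.cast_ite, Nat.cast_one,
    Nat.cast_zero, card_univ]
  calc (Fintype.card I : ℝ)⁻¹ * ∑ m, (∑ κ, hit κ (T m κ)) / Fintype.card K
      = (∑ κ, (∑ m, hit κ (T m κ)) / Fintype.card I) / Fintype.card K := by
        rw [← sum_div, ← sum_div, sum_comm, inv_mul_eq_div, div_right_comm]
    _ = (∑ κ, (∑ l, hit κ l) / Fintype.card L) / Fintype.card K := by simp only [hT _ (hit _)]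
    _ = (∑ v : K × L, hit v.1 v.2) / Fintype.card (K × L) := by
        rw [← sum_div, div_div, Fintype.sum_prod_type, Fintype.card_prod, Nat.cast_mul, mul_comm]

/-- Adding all constants to a separated family makes it balanced. -/
theorem exists_balanced_almostDisjoint_graphs [DecidableEq K] [DecidableEq L] [AddCommGroup L]
    {ε : ℝ} (hε : 0 < ε) (hL : exp (2 / ε) ≤ Fintype.card L) (N : ℕ) [NeZero N]
    (hN : N * Fintype.card L * exp (-Fintype.card K) < 1) :
    ∃ T : Fin N × L → K → L, IsBalanced T ∧
      AlmostDisjoint (fun m => graph (T m)) ε (Fintype.card K) := by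
  obtain ⟨T, hT⟩ := exists_separated_family (K := K) hε hL N hN
  refine ⟨fun m κ => T m.1 κ + m.2, fun κ g => ?_, almostDisjoint_graph fun m m' hne => ?_⟩
  · have shift : ∀ i, ∑ c, g (T i κ + c) = ∑ l, g l := fun i =>
      Equiv.sum_comp (Equiv.addLeft (T i κ)) g
    rw [Fintype.sum_prod_type]
    simp only [shift, sum_const, card_univ, Fintype.card_prod, Fintype.card_fin, nsmul_eq_mul,
      Nat.cast_mul]
    exact mul_div_mul_left _ _ (NeZero.ne _)
  · have agree : ∀ κ, T m.1 κ + m.2 = T m'.1 κ + m'.2 ↔ T m.1 κ = T m'.1 κ + (m'.2 - m.2) :=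
      fun κ => by rw [← eq_sub_iff_add_eq, add_sub_assoc]
    rcases eq_or_ne m.1 m'.1 with h | h
    · have hshift : m.2 ≠ m'.2 := fun h2 => hne (Prod.ext h h2)
      simp only [h, add_right_inj, hshift, filter_false, card_empty, Nat.cast_zero]
      positivity
    · simp only [agree]
      exact hT _ _ h _

end BalancedDesigns

section Construction

variable {IY IZ A B C U V V' : Type*}

/-- The input distribution for the message pair `(i, j)`: the pool `x` is indexed by
`(A × B) × C`, and a uniformly random `a : A` selects the word that lies over the graphs of both
`S j` and `T i`. -/
def encoder [Fintype A] (x : (A × B) × C → U) (T : IY → A × B → C) (S : IZ → A → B) (i : IY)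
    (j : IZ) : U → ℝ :=
  empDist univ fun a => x ((a, S j a), T i (a, S j a))

theorem mixture_encoder_left [Fintype IZ] [Fintype A] [Fintype B] (x : (A × B) × C → U)
    (T : IY → A × B → C) {S : IZ → A → B} (hS : IsBalanced S) (i : IY) :
    mixture (encoder x T S i) = empDist (graph (T i)) x := by
  rw [empDist_graph]
  exact hS.mixture_empDist fun v => x (v, T i v)

theorem mixture_encoder_right [Fintype IY] [Fintype A] [Fintype C] (x : (A × B) × C → U)
    {T : IY → A × B → C} (hT : IsBalanced T) (S : IZ → A → B) (j : IZ) :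
    (mixture fun i => encoder x T S i j) = empDist (graph (S j) ×ˢ univ) x := by
  rw [empDist_graph_product]
  exact IsBalanced.mixture_empDist (T := fun i a => T i (a, S j a)) (fun a => hT (a, S j a))
    fun v => x ((v.1, S j v.1), v.2)

/-- `k` is small enough for a union bound over pairs out of `k` messages to absorb failure
probabilities `exp (-M)`; the bound `1 / 2` leaves room for the two receivers. -/
def FewMessages (k M : ℝ) : Prop := (k + k ^ 2) * exp (-M) < 1 / 2

theorem FewMessages.mul_exp_neg_lt_one {k M : ℝ} (h : FewMessages k M) : k * exp (-M) < 1 := by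
  have : 0 ≤ k ^ 2 * exp (-M) := by positivity
  rw [FewMessages, add_mul] at h
  linarith

theorem FewMessages.mono {k M M' : ℝ} (h : FewMessages k M) (hk : 0 ≤ k) (hM : M ≤ M') :
    FewMessages k M' :=
  lt_of_le_of_lt (by gcongr) h

variable [Fintype U] [Fintype V] [Fintype V'] {p : U → ℝ} {w : U → V → ℝ} {w' : U → V' → ℝ}
  {G : U → Set V} {G' : U → Set V'} {ε : ℝ}

theorem exists_isIDFamily_pair [Fintype IY] [Fintype IZ] {ι : Type*} [Finite ι] [DecidableEq ι]
    (hp : IsPMF p) (hw : IsChannel w) (hw' : IsChannel w') (hε : 0 < ε) {M M' : ℕ} (hM : 0 < M)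
    (hM' : 0 < M') (hG : SmallError p w G ε M) (hG' : SmallError p w' G' ε M')
    {S : IY → Finset ι} {S' : IZ → Finset ι} (hS : AlmostDisjoint S ε M)
    (hS' : AlmostDisjoint S' ε M')
    (small : FewMessages (Fintype.card IY) M) (small' : FewMessages (Fintype.card IZ) M') :
    ∃ x : ι → U,
      IsIDFamily (fun i => outDist (empDist (S i) x) w) (fun i => decoder G x (S i)) ε (2 * ε) ∧
      IsIDFamily (fun j => outDist (empDist (S' j) x) w') (fun j => decoder G' x (S' j))
        ε (2 * ε) := by
  have := Fintype.ofFinite ι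
  have hP := isPMF_prodDist fun _ : ι => hp
  obtain ⟨x, hx⟩ := hP.exists_notMem <| (prob_union_le hP.1 _ _).trans_lt <|
    (add_lt_add ((prob_not_isIDFamily_le hp hw hε hM hG hS).trans_lt small)
      ((prob_not_isIDFamily_le hp hw' hε hM' hG' hS').trans_lt small')).trans_eq (add_halves 1)
  exact ⟨x, by simpa only [Set.mem_union, Set.mem_ofPred_eq, not_or, not_not] using hx⟩

theorem exists_encoder_isIDFamily [Fintype A] [Nonempty A] [Fintype B] [AddCommGroup B]
    [Fintype C] [AddCommGroup C] (hp : IsPMF p) (hw : IsChannel w) (hw' : IsChannel w') (hε : 0 < ε)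
    (hB : exp (2 / ε) ≤ Fintype.card B) (hC : exp (2 / ε) ≤ Fintype.card C)
    (hG : SmallError p w G ε (Fintype.card (A × B) : ℕ))
    (hG' : SmallError p w' G' ε (Fintype.card A * Fintype.card C : ℕ))
    {N N' : ℕ} [NeZero N] [NeZero N']
    (few : FewMessages (Fintype.card (Fin N × C)) (Fintype.card (A × B)))
    (few' : FewMessages (Fintype.card (Fin N' × B)) (Fintype.card A)) :
    ∃ (Q : Fin N × C → Fin N' × B → U → ℝ) (D : Fin N × C → Set V) (D' : Fin N' × B → Set V'),
      (∀ i j, IsPMF (Q i j)) ∧ IsIDFamily (fun i => outDist (mixture (Q i)) w) D ε (2 * ε) ∧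
      IsIDFamily (fun j => outDist (mixture fun i => Q i j) w') D' ε (2 * ε) := by
  obtain ⟨T, hT, disjT⟩ := exists_balanced_almostDisjoint_graphs (K := A × B) hε hC N
    (by simpa using few.mul_exp_neg_lt_one)
  obtain ⟨S, hS, disjS⟩ := exists_balanced_almostDisjoint_graphs (K := A) hε hB N'
    (by simpa using few'.mul_exp_neg_lt_one)
  have few'' : FewMessages (Fintype.card (Fin N' × B)) (Fintype.card A * Fintype.card C : ℕ) :=
    few'.mono (Nat.cast_nonneg _) (Nat.cast_le.2 (Nat.le_mul_of_pos_right _ Fintype.card_pos))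
  obtain ⟨x, hY, hZ⟩ := exists_isIDFamily_pair hp hw hw' hε Fintype.card_pos
    (Nat.mul_pos Fintype.card_pos Fintype.card_pos) hG hG' disjT disjS.product_univ few few''
  refine ⟨encoder x T S, fun i => decoder G x (graph (T i)),
    fun j => decoder G' x (graph (S j) ×ˢ univ), fun i j => isPMF_empDist univ_nonempty _, ?_, ?_⟩
  · simp only [mixture_encoder_left x T hS]
    exact hY
  · simp only [mixture_encoder_right x hT S]
    exact hZ

end Construction

section Codes

variable {X Y Z : Type*} [Fintype X] [Fintype Y] [Fintype Z] {W : X → Y → Z → ℝ} {n : ℕ}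

theorem IsIDFamily.comp {M M' V : Type*} [Fintype V] {q : M → V → ℝ} {D : M → Set V} {l₁ l₂ : ℝ}
    (h : IsIDFamily q D l₁ l₂) {f : M' → M} (hf : f.Injective) :
    IsIDFamily (fun m => q (f m)) (fun m => D (f m)) l₁ l₂ :=
  ⟨fun _ => h.1 _, fun _ _ hne => h.2 _ _ (hf.ne hne)⟩

theorem mixture_comp_equiv {M M' U : Type*} [Fintype M] [Fintype M'] (e : M' ≃ M)
    (Q : M → U → ℝ) : (mixture fun m' => Q (e m')) = mixture Q := by
  ext u
  rw [mixture_apply, mixture_apply, Fintype.card_congr e, e.sum_comp fun m => Q m u]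

theorem exists_isBCIDCode_of_card_eq {IY IZ : Type*} [Fintype IY] [Fintype IZ] {kY kZ : ℕ}
    (hkY : Fintype.card IY = kY) (hkZ : Fintype.card IZ = kZ)
    {Q : IY → IZ → (Fin n → X) → ℝ} (hQ : ∀ i j, IsPMF (Q i j)) {DY : IY → Set (Fin n → Y)}
    {DZ : IZ → Set (Fin n → Z)} {l₁ l₂ l₃ l₄ : ℝ}
    (hY : IsIDFamily (fun i => outDist (mixture (Q i)) (Wn (margY W) n)) DY l₁ l₂)
    (hZ : IsIDFamily (fun j => outDist (mixture fun i => Q i j) (Wn (margZ W) n)) DZ l₃ l₄) :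
    ∃ Q DY DZ, IsBCIDCode n kY kZ W Q DY DZ l₁ l₂ l₃ l₄ := by
  let eY := (Fintype.equivFinOfCardEq hkY).symm
  let eZ := (Fintype.equivFinOfCardEq hkZ).symm
  refine ⟨fun i j => Q (eY i) (eZ j), fun i => (DY (eY i)).toFinset,
    fun j => (DZ (eZ j)).toFinset, isBCIDCode_iff.2 ⟨fun i j => hQ _ _, ?_, ?_⟩⟩
  · have mix (i) : (mixture fun j => Q (eY i) (eZ j)) = mixture (Q (eY i)) :=
      mixture_comp_equiv eZ (Q (eY i))
    simp only [idCodeErr_iff, Set.coe_toFinset, mix]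
    exact hY.comp eY.injective
  · have mix (j) : (mixture fun i => Q (eY i) (eZ j)) = mixture fun i => Q i (eZ j) :=
      mixture_comp_equiv eY fun i => Q i (eZ j)
    simp only [idCodeErr_iff, Set.coe_toFinset, mix]
    exact hZ.comp eZ.injective

theorem exists_isBCIDCode_of_smallError (hW : IsBC W) {p : (Fin n → X) → ℝ} (hp : IsPMF p) {ε : ℝ}
    (hε : 0 < ε) {A J L N₁ N₂ : ℕ} [NeZero A] [NeZero J] [NeZero L] [NeZero N₁] [NeZero N₂]
    (hJ : exp (2 / ε) ≤ J) (hL : exp (2 / ε) ≤ L) {GY : (Fin n → X) → Set (Fin n → Y)}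
    {GZ : (Fin n → X) → Set (Fin n → Z)}
    (hGY : SmallError p (Wn (margY W) n) GY ε (A * J : ℕ))
    (hGZ : SmallError p (Wn (margZ W) n) GZ ε (A * L : ℕ))
    (fewY : FewMessages (N₁ * L : ℕ) (A * J : ℕ)) (fewZ : FewMessages (N₂ * J : ℕ) A) :
    ∃ Q DY DZ, IsBCIDCode n (N₁ * L) (N₂ * J) W Q DY DZ ε (2 * ε) ε (2 * ε) := by
  obtain ⟨Q, DY, DZ, hQ, hY, hZ⟩ := exists_encoder_isIDFamily (A := Fin A) (B := Fin J)
    (C := Fin L) (N := N₁) (N' := N₂) hp (isChannel_Wn (isChannel_margY hW) n)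
    (isChannel_Wn (isChannel_margZ hW) n) hε (by simpa using hJ) (by simpa using hL)
    (by simpa using hGY) (by simpa using hGZ) (by simpa using fewY) (by simpa using fewZ)
  exact exists_isBCIDCode_of_card_eq (by simp) (by simp) hQ hY hZ

end Codes

section Typicality

variable {X Y : Type*} [Fintype X] {P : X → ℝ} {W : X → Y → ℝ} {n : ℕ} {ρ : ℝ}

/-- The output words whose information density with respect to the input word `x` is at least
`n * ρ`; written multiplicatively so that vanishing probabilities need no convention. -/
def typSet (P : X → ℝ) (W : X → Y → ℝ) (n : ℕ) (ρ : ℝ) (x : Fin n → X) : Set (Fin n → Y) :=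
  {y | exp (n * ρ) * ∏ i, outDist P W (y i) ≤ Wn W n x y}

theorem outDist_Wn (P : X → ℝ) (W : X → Y → ℝ) (y : Fin n → Y) :
    outDist (prodDist fun _ => P) (Wn W n) y = ∏ i, outDist P W (y i) :=
  mean_prodDist_prod (fun _ => P) fun i a => W a (y i)

theorem sum_infoDens_lt_of_notMem_typSet (hP : ∀ a, 0 ≤ P a) (hW : ∀ a b, 0 ≤ W a b)
    {x : Fin n → X} {y : Fin n → Y} (hy : y ∉ typSet P W n ρ x)
    (hpos : ∀ i, 0 < P (x i) * W (x i) (y i)) : ∑ i, infoDens P W (x i) (y i) < n * ρ := by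
  have hprod : 0 ≤ ∏ i, outDist P W (y i) := prod_nonneg fun i _ => outDist_nonneg hP hW _
  have hlt : Wn W n x y < exp (n * ρ) * ∏ i, outDist P W (y i) := not_le.1 hy
  rw [Wn, ← exp_sum_infoDens_mul hP hW hpos] at hlt
  exact exp_lt_exp.1 (lt_of_mul_lt_mul_right hlt hprod)

variable [Fintype Y]

theorem exp_mul_prob_typSet_le_one (P : X → ℝ) (hW : IsChannel W) (ρ : ℝ) (x : Fin n → X) :
    exp (n * ρ) * prob (outDist (prodDist fun _ => P) (Wn W n)) (typSet P W n ρ x) ≤ 1 := by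
  rw [← (isChannel_Wn hW n).2 x, prob, mul_sum]
  refine sum_le_sum fun y _ => ?_
  by_cases hy : y ∈ typSet P W n ρ x
  · rw [Set.indicator_of_mem hy, outDist_Wn]
    exact hy
  · rw [Set.indicator_of_notMem hy, mul_zero]
    exact (isChannel_Wn hW n).1 x y

theorem mean_prodDist_joint (P : X → ℝ) (W : X → Y → ℝ) (f : (Fin n → X × Y) → ℝ) :
    mean (prodDist fun _ => joint P W) f
      = mean (prodDist fun _ => P) fun x => mean (Wn W n x) fun y => f fun i => (x i, y i) := by
  rw [← mean_joint _ (Wn W n) fun u => f fun i => (u.1 i, u.2 i)]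
  refine Fintype.sum_equiv (Equiv.arrowProdEquivProdArrow (Fin n) (fun _ => X) fun _ => Y) _ _
    fun u => ?_
  simp only [prodDist, joint, prod_mul_distrib]
  rfl

theorem prob_prodDist_joint (P : X → ℝ) (W : X → Y → ℝ) (E : (Fin n → X) → Set (Fin n → Y)) :
    mean (prodDist fun _ => P) (fun x => prob (Wn W n x) (E x))
      = prob (prodDist fun _ => joint P W) {u | (fun i => (u i).2) ∈ E fun i => (u i).1} := by
  simp only [prob_eq_mean, mean_prodDist_joint]
  rfl

theorem mean_prob_typSet_compl_le (hP : IsPMF P) (hW : IsChannel W) (hn : 0 < n)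
    (hρ : ρ < mutInf P W) :
    mean (prodDist fun _ => P) (fun x => prob (Wn W n x) (typSet P W n ρ x)ᶜ)
      ≤ mean (joint P W) (fun u => infoDens P W u.1 u.2 ^ 2) / (n * (mutInf P W - ρ) ^ 2) := by
  have hn0 : (0 : ℝ) < n := by exact_mod_cast hn
  have hJ := isPMF_joint hP hW
  have deviation := chebyshev_prodDist (ι := Fin n) (fun _ => hJ) (fun _ u => infoDens P W u.1 u.2)
    (mul_pos hn0 (sub_pos.2 hρ)) fun _ => le_rfl
  rw [mean_joint, ← mutInf_eq_mean_infoDens, sum_const, card_univ, Fintype.card_fin,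
    nsmul_eq_mul] at deviation
  rw [prob_prodDist_joint]
  refine (prob_mono (prodDist_nonneg fun _ => hJ.1) fun u hu hpos => ?_).trans
    (deviation.trans_eq (by field_simp))
  have hpos' : ∀ i, 0 < P (u i).1 * W (u i).1 (u i).2 := fun i =>
    (hJ.1 (u i)).lt_of_ne' (prod_ne_zero_iff.1 hpos.ne' i (mem_univ i))
  have hlt := sum_infoDens_lt_of_notMem_typSet hP.1 hW.1 hu hpos'
  rw [Set.mem_ofPred_eq, abs_sub_comm]
  exact le_trans (by linarith) (le_abs_self _)

theorem eventually_exists_smallError (hP : IsPMF P) (hW : IsChannel W) (ε : ℝ)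
    (hρ : ρ < mutInf P W) (C : ℝ) :
    ∀ᶠ n : ℕ in atTop, ∃ G : (Fin n → X) → Set (Fin n → Y), ∀ M ≤ C * exp (n * ρ),
      SmallError (prodDist fun _ => P) (Wn W n) G ε M := by
  obtain ⟨ρ', hρρ', hρ'⟩ := exists_between hρ
  have hgap : 0 < (mutInf P W - ρ') ^ 2 := pow_pos (sub_pos.2 hρ') 2
  have miss := ((tendsto_natCast_atTop_atTop (R := ℝ)).atTop_mul_const hgap).const_div_atTop
    (mean (joint P W) fun u => infoDens P W u.1 u.2 ^ 2)
  filter_upwards [miss.eventually_le_const (exp_pos (-(2 / ε))),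
    eventually_poly_le_exp (C * exp (2 / ε)) 0 (sub_pos.2 hρρ'), eventually_gt_atTop 0]
    with n hmiss hC hn
  refine ⟨typSet P W n ρ', fun M hM =>
    ⟨(mean_prob_typSet_compl_le hP hW hn hρ').trans hmiss, fun x => ?_⟩⟩
  have hq := prob_nonneg (outDist_nonneg (prodDist_nonneg fun _ => hP.1) (isChannel_Wn hW n).1)
    (typSet P W n ρ' x)
  calc M * prob (outDist (prodDist fun _ => P) (Wn W n)) (typSet P W n ρ' x)
      ≤ exp (-(2 / ε)) * exp (n * ρ')
        * prob (outDist (prodDist fun _ => P) (Wn W n)) (typSet P W n ρ' x) := by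
        refine mul_le_mul_of_nonneg_right (hM.trans ?_) hq
        rw [pow_zero, mul_one] at hC
        calc C * exp (n * ρ) = C * exp (2 / ε) * exp (n * ρ - 2 / ε) := by
              rw [exp_sub]
              field_simp
          _ ≤ exp ((ρ' - ρ) * n) * exp (n * ρ - 2 / ε) := by gcongr
          _ = exp (-(2 / ε)) * exp (n * ρ') := by
              rw [← exp_add, ← exp_add]
              ring_nf
    _ ≤ exp (-(2 / ε)) := by
        rw [mul_assoc]
        exact mul_le_of_le_one_right (exp_pos _).le (exp_mul_prob_typSet_le_one P hW ρ' x)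

end Typicality

section Achievability

theorem natCeil_exp_mul_natCeil_exp_le {a b : ℝ} (ha : 0 ≤ a) (hb : 0 ≤ b) :
    ((⌈exp a⌉₊ * ⌈exp b⌉₊ : ℕ) : ℝ) ≤ 4 * exp (a + b) := by
  have ceil_le {c : ℝ} (hc : 0 ≤ c) : (⌈exp c⌉₊ : ℝ) ≤ 2 * exp c := by
    linarith [Nat.ceil_lt_add_one (exp_pos c).le, one_le_exp hc]
  push_cast
  calc (⌈exp a⌉₊ : ℝ) * ⌈exp b⌉₊ ≤ 2 * exp a * (2 * exp b) := by gcongr <;> exact ceil_le ‹_›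
    _ = 4 * exp (a + b) := by rw [exp_add]; ring

theorem exp_add_le_natCeil_exp_mul_natCeil_exp (a b : ℝ) :
    exp (a + b) ≤ (⌈exp a⌉₊ * ⌈exp b⌉₊ : ℕ) := by
  rw [exp_add, Nat.cast_mul]
  gcongr <;> exact Nat.le_ceil _

theorem eventually_fewMessages {R ρ s C : ℝ} (hR : 0 ≤ R) (hRρ : R < ρ) (hs : 0 ≤ s)
    (hC : 1 ≤ C) :
    ∀ᶠ n : ℕ in atTop, ∀ k m : ℝ, 0 ≤ k → k ≤ C * exp (exp (n * R) + n * s) → exp (n * ρ) ≤ m →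
      FewMessages k m := by
  set c := log (4 * C ^ 2)
  filter_upwards [eventually_poly_le_exp (c + 3 + 2 * s) 1 (sub_pos.2 hRρ)]
    with n hn k m hk hkle hm
  set E := exp (n * R)
  set K := C * exp (E + n * s)
  have hE : 1 ≤ E := one_le_exp (by positivity)
  have hc : 0 ≤ c := log_nonneg (by nlinarith)
  have hK : 1 ≤ K := one_le_mul_of_one_le_of_one_le hC (one_le_exp (by positivity))
  have hKsq : 4 * K ^ 2 = exp (c + 2 * (E + n * s)) := by
    rw [exp_add, exp_log (by positivity), two_mul, exp_add (_ + _)]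
    ring
  have exponent_lt : c + 2 * (E + n * s) < m :=
    calc c + 2 * (E + n * s) < (c + 3 + 2 * s) * (n + 1) ^ 1 * E := by
          have : (0 : ℝ) ≤ n := n.cast_nonneg
          have : 1 ≤ (n + 1) * E := by nlinarith
          have : E ≤ (n + 1) * E := by nlinarith
          have : n ≤ (n + 1) * E := by nlinarith
          rw [pow_one]
          nlinarith
      _ ≤ exp ((ρ - R) * n) * E := by gcongr
      _ = exp (n * ρ) := by rw [← exp_add]; ring_nf
      _ ≤ m := hm
  calc (k + k ^ 2) * exp (-m) ≤ (K + K ^ 2) * exp (-m) := by gcongr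
    _ ≤ 2 * K ^ 2 * exp (-m) := by gcongr; nlinarith
    _ = exp (c + 2 * (E + n * s) - m) / 2 := by rw [sub_eq_add_neg, exp_add, ← hKsq]; ring
    _ < 1 / 2 := by
      gcongr
      exact exp_lt_one_iff.2 (sub_neg.2 exponent_lt)

theorem hasIDRate_of_exp_exp_le {n k : ℕ} (hn : 0 < n) {R : ℝ} (hR : 0 < R)
    (hk : exp (exp (n * R)) ≤ k) : HasIDRate n k R := by
  refine ⟨fun _ => ?_, fun h => absurd h hR.ne'⟩
  have hlog : exp (n * R) ≤ log k := (le_log_iff_exp_le ((exp_pos _).trans_le hk)).2 hk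
  rw [one_div, inv_mul_eq_div, le_div_iff₀' (by exact_mod_cast hn)]
  exact (le_log_iff_exp_le ((exp_pos _).trans_le hlog)).2 hlog

theorem IsBC.swap {X Y Z : Type*} [Fintype Y] [Fintype Z] {W : X → Y → Z → ℝ} (hW : IsBC W) :
    IsBC fun x z y => W x y z :=
  ⟨fun x z y => hW.1 x y z, fun x => by rw [sum_comm]; exact hW.2 x⟩

variable {X Y Z : Type*} [Fintype X] [Fintype Y] [Fintype Z] {W : X → Y → Z → ℝ}

theorem IDCodeErr.mono {M : Type*} {n : ℕ} {V : X → Y → ℝ} {Q : M → (Fin n → X) → ℝ}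
    {D : M → Finset (Fin n → Y)} {a b a' b' : ℝ} (h : IDCodeErr n V Q D a b) (ha : a ≤ a')
    (hb : b ≤ b') : IDCodeErr n V Q D a' b' :=
  ⟨fun m => (h.1 m).trans ha, fun m m' hne => (h.2 m m' hne).trans hb⟩

theorem idCodeErr_univ {M : Type*} [Subsingleton M] {n : ℕ} (V : X → Y → ℝ)
    (Q : M → (Fin n → X) → ℝ) {a b : ℝ} (ha : 0 ≤ a) : IDCodeErr n V Q (fun _ => univ) a b :=
  ⟨fun _ => by simpa using ha, fun m m' hne => absurd (Subsingleton.elim m m') hne⟩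

theorem BCAchievable.swap {R : ℝ × ℝ} (h : BCAchievable W R) :
    BCAchievable (fun x z y => W x y z) R.swap := by
  refine ⟨h.2.1, h.1, fun a b c d ha hb hc hd => ?_⟩
  obtain ⟨n₀, hn₀⟩ := h.2.2 c d a b hc hd ha hb
  refine ⟨n₀, fun n hn => ?_⟩
  obtain ⟨kY, kZ, Q, DY, DZ, hQ, hY, hZ⟩ := hn₀ n hn
  exact ⟨kZ, kY, fun j i => Q i j, DZ, DY, ⟨fun j i => hQ.1 i j, hQ.2.2, hQ.2.1⟩, hZ, hY⟩

theorem bcAchievable_of_eventually {R : ℝ × ℝ} (hR₁ : 0 ≤ R.1) (hR₂ : 0 ≤ R.2)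
    (h : ∀ ε > 0, ∀ᶠ n : ℕ in atTop, ∃ kY kZ : ℕ,
      (∃ Q DY DZ, IsBCIDCode n kY kZ W Q DY DZ ε (2 * ε) ε (2 * ε)) ∧
        HasIDRate n kY R.1 ∧ HasIDRate n kZ R.2) : BCAchievable W R := by
  refine ⟨hR₁, hR₂, fun a b c d ha hb hc hd => eventually_atTop.1 ?_⟩
  set ε := min (min a b) (min c d) / 2
  have hε : 0 < ε := by positivity
  have hle : 2 * ε ≤ min (min a b) (min c d) := (mul_div_cancel₀ _ two_ne_zero).le
  simp only [le_min_iff] at hle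
  filter_upwards [h ε hε] with n hn
  obtain ⟨kY, kZ, ⟨Q, DY, DZ, hQ, hY, hZ⟩, rate⟩ := hn
  exact ⟨kY, kZ, Q, DY, DZ, ⟨hQ, hY.mono (by linarith) hle.1.2, hZ.mono (by linarith) hle.2.2⟩,
    rate⟩

theorem eventually_exists_isBCIDCode (hW : IsBC W) {P : X → ℝ} (hP : IsPMF P) {R₁ R₂ ρ₁ ρ₂ ε : ℝ}
    (hR₁ : 0 ≤ R₁) (hR₂ : 0 ≤ R₂) (hRρ₁ : R₁ < ρ₁) (hRρ₂ : R₂ < ρ₂) (hρ : ρ₂ < ρ₁)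
    (hρI₁ : ρ₁ < mutInf P (margY W)) (hρI₂ : ρ₂ < mutInf P (margZ W)) (hε : 0 < ε) :
    ∀ᶠ n : ℕ in atTop, ∃ Q DY DZ,
      IsBCIDCode n (⌈exp (exp (n * R₁))⌉₊ * ⌈exp (2 / ε)⌉₊)
        (⌈exp (exp (n * R₂))⌉₊ * ⌈exp (n * (ρ₁ - ρ₂))⌉₊) W Q DY DZ ε (2 * ε) ε (2 * ε) := by
  have ceil_neZero (a : ℝ) : NeZero ⌈exp a⌉₊ := ⟨(Nat.ceil_pos.2 (exp_pos a)).ne'⟩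
  have hρ₂ : 0 ≤ ρ₂ := hR₂.trans hRρ₂.le
  have hδ : 0 ≤ ρ₁ - ρ₂ := sub_nonneg.2 hρ.le
  have hL : 0 ≤ 2 / ε := by positivity
  filter_upwards [eventually_exists_smallError hP (isChannel_margY hW) ε hρI₁ 4,
    eventually_exists_smallError hP (isChannel_margZ hW) ε hρI₂ (4 * exp (2 / ε)),
    eventually_fewMessages hR₁ hRρ₁ le_rfl (C := 4 * exp (2 / ε)) (by linarith [one_le_exp hL]),
    eventually_fewMessages hR₂ hRρ₂ hδ (C := 4) (by norm_num),
    eventually_poly_le_exp (exp (2 / ε)) 0 (sub_pos.2 hρ)]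
    with n ⟨GY, smallY⟩ ⟨GZ, smallZ⟩ fewY fewZ hJ
  have split : n * ρ₂ + n * (ρ₁ - ρ₂) = n * ρ₁ := by ring
  have pool_le := natCeil_exp_mul_natCeil_exp_le (mul_nonneg n.cast_nonneg hρ₂)
    (mul_nonneg n.cast_nonneg hδ)
  have le_pool := exp_add_le_natCeil_exp_mul_natCeil_exp (n * ρ₂) (n * (ρ₁ - ρ₂))
  rw [split] at pool_le le_pool
  refine exists_isBCIDCode_of_smallError (A := ⌈exp (n * ρ₂)⌉₊) hW (isPMF_prodDist fun _ => hP) hε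
    (le_trans ?_ (Nat.le_ceil _)) (Nat.le_ceil _) (smallY _ pool_le) (smallZ _ ?_)
    (fewY _ _ (Nat.cast_nonneg _) ?_ le_pool)
    (fewZ _ _ (Nat.cast_nonneg _) ?_ (Nat.le_ceil _))
  · rwa [pow_zero, mul_one, mul_comm _ (n : ℝ)] at hJ
  · refine (natCeil_exp_mul_natCeil_exp_le (mul_nonneg n.cast_nonneg hρ₂) hL).trans_eq ?_
    rw [exp_add]
    ring
  · refine (natCeil_exp_mul_natCeil_exp_le (exp_pos _).le hL).trans_eq ?_
    rw [mul_zero, add_zero, exp_add]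
    ring
  · exact natCeil_exp_mul_natCeil_exp_le (exp_pos _).le (mul_nonneg n.cast_nonneg hδ)

theorem bcAchievable_of_le (hW : IsBC W) {P : X → ℝ} (hP : IsPMF P) {R₁ R₂ : ℝ} (hR₂ : 0 < R₂)
    (hR : R₂ ≤ R₁) (hI₁ : R₁ < mutInf P (margY W)) (hI₂ : R₂ < mutInf P (margZ W)) :
    BCAchievable W (R₁, R₂) := by
  have hR₁ : 0 < R₁ := hR₂.trans_le hR
  obtain ⟨ρ₂, hRρ₂, hρI⟩ := exists_between (lt_min hI₂ (hR.trans_lt hI₁))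
  obtain ⟨hρI₂, hρI₁⟩ := lt_min_iff.1 hρI
  obtain ⟨ρ₁, hRρ₁, hρ₁I⟩ := exists_between (max_lt hI₁ hρI₁)
  obtain ⟨hRρ₁, hρ⟩ := max_lt_iff.1 hRρ₁
  refine bcAchievable_of_eventually hR₁.le hR₂.le fun ε hε => ?_
  filter_upwards [eventually_exists_isBCIDCode hW hP hR₁.le hR₂.le hRρ₁ hRρ₂ hρ hρ₁I hρI₂ hε,
    eventually_gt_atTop 0] with n hcode hn
  have le_size {a : ℝ} (b : ℝ) : exp a ≤ (⌈exp a⌉₊ * ⌈exp b⌉₊ : ℕ) :=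
    (Nat.le_ceil _).trans (Nat.cast_le.2 (Nat.le_mul_of_pos_right _ (Nat.ceil_pos.2 (exp_pos b))))
  exact ⟨_, _, hcode, hasIDRate_of_exp_exp_le hn hR₁ (le_size _),
    hasIDRate_of_exp_exp_le hn hR₂ (le_size _)⟩

theorem BCAchievable.of_margY_eq {Z' : Type*} [Fintype Z'] {W' : X → Y → Z' → ℝ}
    (hW : margY W' = margY W) {R : ℝ × ℝ} (h : BCAchievable W' R) : BCAchievable W (R.1, 0) := by
  refine ⟨h.1, le_rfl, fun a b c d ha hb hc hd => eventually_atTop.1 ?_⟩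
  filter_upwards [eventually_atTop.2 (h.2.2 a b c d ha hb hc hd), eventually_gt_atTop 0]
    with n ⟨kY, kZ, Q, DY, DZ, code, rateY, rateZ⟩ hn
  obtain ⟨hQ, errY, -⟩ := isBCIDCode_iff.1 code
  have : NeZero n := ⟨hn.ne'⟩
  have : Nonempty (Fin kZ) := ⟨⟨0, HasIDRate.pos rateZ h.2.1⟩⟩
  have mix (q : (Fin n → X) → ℝ) : (mixture fun _ : Fin 1 => q) = q := by
    ext
    simp [mixture_apply]
  refine ⟨kY, 1, fun i _ => mixture (Q i), DY, fun _ => univ,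
    isBCIDCode_iff.2 ⟨fun i _ => isPMF_mixture (hQ i), ?_, idCodeErr_univ _ _ hc.le⟩, rateY,
    by simp⟩
  simpa only [mix, hW] using errY

theorem bcAchievable_zero {P : X → ℝ} (hP : IsPMF P) : BCAchievable W (0, 0) :=
  ⟨le_rfl, le_rfl, fun _ _ _ _ ha _ hc _ => ⟨0, fun _ _ =>
    ⟨1, 1, fun _ _ => prodDist fun _ => P, fun _ => univ, fun _ => univ,
      ⟨fun _ _ => isPMF_prodDist fun _ => hP, idCodeErr_univ _ _ ha.le, idCodeErr_univ _ _ hc.le⟩,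
      by simp, by simp⟩⟩⟩

/-- Both receivers of the broadcast channel that duplicates the output `Y` see the same channel, so
the equal-rate pair is covered there; a receiver with rate `0` may then be ignored. -/
theorem bcAchievable_fst (hW : IsBC W) {P : X → ℝ} (hP : IsPMF P) {R : ℝ} (hR : 0 < R)
    (hI : R < mutInf P (margY W)) : BCAchievable W (R, 0) := by
  let duplicate : X → Y → Y → ℝ := fun x y y' => if y = y' then margY W x y else 0
  have fst : margY duplicate = margY W := by
    ext x y
    simp [duplicate, margY]
  have snd : margZ duplicate = margY W := by
    ext x y
    simp [duplicate, margZ]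
  have isBC : IsBC duplicate := by
    refine ⟨fun x y y' => ?_, fun x => ?_⟩
    · dsimp only [duplicate]
      split_ifs
      exacts [(isChannel_margY hW).1 x y, le_rfl]
    · exact (sum_congr rfl fun y _ => congrFun₂ fst x y).trans ((isChannel_margY hW).2 x)
  exact (bcAchievable_of_le isBC hP hR le_rfl (fst ▸ hI) (snd ▸ hI)).of_margY_eq fst

theorem bcAchievable_of_lt (hW : IsBC W) {P : X → ℝ} (hP : IsPMF P) {R : ℝ × ℝ}
    (h₁ : R.1 = 0 ∨ 0 < R.1 ∧ R.1 < mutInf P (margY W))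
    (h₂ : R.2 = 0 ∨ 0 < R.2 ∧ R.2 < mutInf P (margZ W)) : BCAchievable W R := by
  obtain ⟨R₁, R₂⟩ := R
  rcases h₁ with rfl | ⟨h₁, hI₁⟩ <;> rcases h₂ with rfl | ⟨h₂, hI₂⟩
  · exact bcAchievable_zero hP
  · exact (bcAchievable_fst hW.swap hP h₂ hI₂).swap
  · exact bcAchievable_fst hW hP h₁ hI₁
  · rcases le_total R₂ R₁ with h | h
    · exact bcAchievable_of_le hW hP h₂ h hI₁ hI₂
    · exact (bcAchievable_of_le hW.swap hP h₁ h hI₂ hI₁).swap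

end Achievability

section CapacityRegion

variable {X Y Z : Type*} [Fintype X] [Fintype Y] [Fintype Z]

/-- The rate pairs that a single input distribution supports at both of the channels `W` and `V`. -/
def rateRegion (W : X → Y → ℝ) (V : X → Z → ℝ) : Set (ℝ × ℝ) :=
  {p | 0 ≤ p.1 ∧ 0 ≤ p.2 ∧ ∃ P : X → ℝ, IsPMF P ∧ p.1 ≤ mutInf P W ∧ p.2 ≤ mutInf P V}

theorem isClosed_rateRegion {W : X → Y → ℝ} {V : X → Z → ℝ} (hW : ∀ x y, 0 ≤ W x y)
    (hV : ∀ x z, 0 ≤ V x z) : IsClosed (rateRegion W V) := by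
  refine IsSeqClosed.isClosed fun u p hu hup => ?_
  choose nonneg₁ nonneg₂ P hP hPW hPV using hu
  obtain ⟨Q, hQ, φ, hφ, hlim⟩ :=
    (isCompact_stdSimplex ℝ X : IsCompact {P : X → ℝ | IsPMF P}).tendsto_subseq hP
  have hlim' : Tendsto (P ∘ φ) atTop (𝓝[{P | IsPMF P}] Q) :=
    tendsto_nhdsWithin_iff.2 ⟨hlim, Eventually.of_forall fun k => hP (φ k)⟩
  have lim₁ := (continuous_fst.tendsto p).comp hup
  have lim₂ := (continuous_snd.tendsto p).comp hup
  exact ⟨ge_of_tendsto' lim₁ nonneg₁, ge_of_tendsto' lim₂ nonneg₂, Q, hQ,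
    le_of_tendsto_of_tendsto' (lim₁.comp hφ.tendsto_atTop)
      ((continuousOn_mutInf hW Q hQ).tendsto.comp hlim') fun k => hPW (φ k),
    le_of_tendsto_of_tendsto' (lim₂.comp hφ.tendsto_atTop)
      ((continuousOn_mutInf hV Q hQ).tendsto.comp hlim') fun k => hPV (φ k)⟩

variable {W : X → Y → Z → ℝ} {R : ℝ × ℝ}

theorem BCAchievable.mem_rateRegion [Nonempty X] (hW : IsBC W) (h : BCAchievable W R) :
    R ∈ rateRegion (margY W) (margZ W) := by
  have hY := isChannel_margY hW
  have hZ := isChannel_margZ hW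
  have lim {a : ℝ} (ha : 0 ≤ a) : Tendsto (fun δ => max (a - δ) 0) (𝓝[>] 0) (𝓝 a) :=
    ((by fun_prop : Continuous fun δ => max (a - δ) 0).tendsto' 0 a (by simp [ha])).mono_left
      nhdsWithin_le_nhds
  refine (isClosed_rateRegion hY.1 hZ.1).mem_of_tendsto
    ((lim h.1).prodMk_nhds (lim h.2.1)) ?_
  filter_upwards [self_mem_nhdsWithin] with δ hδ
  obtain ⟨P, hP, h₁, h₂⟩ := h.exists_isPMF hW hδ
  exact ⟨le_max_right _ _, le_max_right _ _, P, hP, max_le h₁ (mutInf_nonneg hP hY.1),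
    max_le h₂ (mutInf_nonneg hP hZ.1)⟩

theorem mem_closure_bcAchievable (hW : IsBC W) (h : R ∈ rateRegion (margY W) (margZ W)) :
    R ∈ closure {p | BCAchievable W p} := by
  obtain ⟨hR₁, hR₂, P, hP, h₁, h₂⟩ := h
  have scaled {t a I : ℝ} (ht : t ∈ Set.Ioo 0 1) (ha : 0 ≤ a) (haI : a ≤ I) :
      t * a = 0 ∨ 0 < t * a ∧ t * a < I := by
    rcases ha.eq_or_lt with rfl | ha
    · exact Or.inl (mul_zero t)
    · exact Or.inr ⟨mul_pos ht.1 ha, (mul_lt_of_lt_one_left ha ht.2).trans_le haI⟩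
  have lim : Tendsto (fun t : ℝ => t • R) (𝓝[<] 1) (𝓝 R) :=
    ((by fun_prop : Continuous fun t : ℝ => t • R).tendsto' 1 R (one_smul ℝ R)).mono_left
      nhdsWithin_le_nhds
  refine mem_closure_of_tendsto lim ?_
  filter_upwards [Ioo_mem_nhdsLT one_pos] with t ht
  exact bcAchievable_of_lt hW hP (scaled ht hR₁ h₁) (scaled ht hR₂ h₂)

end CapacityRegion

end

/-- **Theorem 3.** The average-error ID capacity region of the
two-receiver BC is the set of rate pairs `(R_Y, R_Z)` for which some input PMF
`P` satisfies `R_Y ≤ I(P, W_Y)` and `R_Z ≤ I(P, W_Z)`. -/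
theorem bc_id_capacity_region
    {X Y Z : Type} [Fintype X] [Fintype Y] [Fintype Z]
    [Nonempty X] [Nonempty Y] [Nonempty Z]
    (W : X → Y → Z → ℝ) (hW : IsBC W) :
    closure {p : ℝ × ℝ | BCAchievable W p}
      = {p : ℝ × ℝ | 0 ≤ p.1 ∧ 0 ≤ p.2 ∧
          ∃ P : X → ℝ, IsPMF P ∧
            p.1 ≤ mutInf P (margY W) ∧ p.2 ≤ mutInf P (margZ W)} := by
  change closure {p | BCAchievable W p} = rateRegion (margY W) (margZ W)
  apply subset_antisymm
  · exact closure_minimal (fun _ achievable => achievable.mem_rateRegion hW)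
      (isClosed_rateRegion (isChannel_margY hW).1 (isChannel_margZ hW).1)
  · exact fun _ => mem_closure_bcAchievable hW
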